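/- arXiv:2106.14576 — 3 statements merged into one kernel-verified Lean document; each statement's English description precedes it below -/
import Mathlib

section
/- Compactness of minimizers (limit is a minimizer): let Ω ⊆ ℝⁿ be open and let (u_k) be a sequence of minimizers of J in Ω which is locally uniformly Lipschitz (for every compact K ⊆ ℝⁿ there is L such that every u_k is L-Lipschitz on K) and converges pointwise to a function u : ℝⁿ → ℝ. Then u is nonnegative, locally Lipschitz, and a minimizer of J in Ω. -/
open MeasureTheory Metric Set Filter ENNReal NNReal

/-- The Alt–Caffarelli energy `J_D(u) = ∫_D (‖∇u‖² + 𝟙_{u>0})`, valued in `[0,∞]`. -/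
noncomputable def JE {n : ℕ} (D : Set (EuclideanSpace ℝ (Fin n)))
    (u : EuclideanSpace ℝ (Fin n) → ℝ) : ℝ≥0∞ :=
  ∫⁻ x in D, ((‖gradient u x‖₊ : ℝ≥0∞) ^ 2 + if 0 < u x then 1 else 0)

/-- `u` is a (nonnegative, locally Lipschitz) minimizer of `J` in the open set `Ω`:
for every nonnegative locally Lipschitz competitor `v` with `{v ≠ u}` a bounded subset
of `Ω`, one has `J_{Ω ∩ B}(u) ≤ J_{Ω ∩ B}(v)` for every open ball `B ⊇ {v ≠ u}`. -/
def IsMinimizer {n : ℕ} (Ω : Set (EuclideanSpace ℝ (Fin n)))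
    (u : EuclideanSpace ℝ (Fin n) → ℝ) : Prop :=
  (∀ x, 0 ≤ u x) ∧ LocallyLipschitz u ∧
  ∀ v : EuclideanSpace ℝ (Fin n) → ℝ, (∀ x, 0 ≤ v x) → LocallyLipschitz v →
    Bornology.IsBounded {x | v x ≠ u x} → {x | v x ≠ u x} ⊆ Ω →
    ∀ (c : EuclideanSpace ℝ (Fin n)) (r : ℝ), {x | v x ≠ u x} ⊆ Metric.ball c r →
      JE (Ω ∩ Metric.ball c r) u ≤ JE (Ω ∩ Metric.ball c r) v


theorem aux_weak_smooth {n : ℕ} {L : ℝ≥0} (f : ℕ → EuclideanSpace ℝ (Fin n) → ℝ)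
    (f₀ : EuclideanSpace ℝ (Fin n) → ℝ) (hf : ∀ k, LipschitzWith L (f k))
    (hf₀ : LipschitzWith L f₀) (hc : ∀ x, Tendsto (fun k => f k x) atTop (nhds (f₀ x)))
    (g : EuclideanSpace ℝ (Fin n) → ℝ) (hg : ContDiff ℝ 1 g) (hgc : HasCompactSupport g)
    (e : EuclideanSpace ℝ (Fin n)) :
    Tendsto (fun k => ∫ x, lineDeriv ℝ (f k) x e * g x) atTop
      (nhds (∫ x, lineDeriv ℝ f₀ x e * g x)) := by
  obtain ⟨C, hC⟩ := ContDiff.lipschitzWith_of_hasCompactSupport hgc hg (by simp)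
  rw [hf₀.integral_lineDeriv_mul_eq hC hgc]
  simp_rw [fun k => (hf k).integral_lineDeriv_mul_eq (μ := volume) hC hgc e]
  simp_rw [(hg.differentiable (by simp)).differentiableAt.lineDeriv_eq_fderiv]
  obtain ⟨M, hM⟩ := (hc 0).norm.bddAbove_range
  have hcont : Continuous fun x => fderiv ℝ g x (-e) :=
    (hg.continuous_fderiv (by simp)).clm_apply continuous_const
  have hcomp : HasCompactSupport fun x => fderiv ℝ g x (-e) := hgc.fderiv_apply ℝ (-e)
  apply tendsto_integral_of_dominated_convergence
    (fun x => ‖fderiv ℝ g x (-e) * (M + L * ‖x‖)‖)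
  · intro k
    exact (hcont.mul (hf k).continuous).aestronglyMeasurable
  · apply Integrable.norm
    apply Continuous.integrable_of_hasCompactSupport
    · fun_prop
    · exact hcomp.mul_right
  · intro k
    refine Eventually.of_forall fun x => ?_
    simp only [norm_mul]
    gcongr
    have h1 : ‖f k 0‖ ≤ M := hM ⟨k, rfl⟩
    have h2 := (hf k).norm_sub_le x 0
    have h3 : ‖f k x‖ ≤ ‖f k 0‖ + ‖f k x - f k 0‖ := by
      have := norm_add_le (f k 0) (f k x - f k 0)
      simpa using this
    rw [sub_zero] at h2
    refine le_trans ?_ (le_abs_self _)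
    linarith
  · exact Eventually.of_forall fun x => (hc x).const_mul _

theorem aux_weak {n : ℕ} {L : ℝ≥0} (f : ℕ → EuclideanSpace ℝ (Fin n) → ℝ)
    (f₀ : EuclideanSpace ℝ (Fin n) → ℝ) (hf : ∀ k, LipschitzWith L (f k))
    (hf₀ : LipschitzWith L f₀) (hc : ∀ x, Tendsto (fun k => f k x) atTop (nhds (f₀ x)))
    (g : EuclideanSpace ℝ (Fin n) → ℝ) (hg : Integrable g)
    (e : EuclideanSpace ℝ (Fin n)) :
    Tendsto (fun k => ∫ x, lineDeriv ℝ (f k) x e * g x) atTop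
      (nhds (∫ x, lineDeriv ℝ f₀ x e * g x)) := by
  have key : ∀ (φ : EuclideanSpace ℝ (Fin n) → ℝ), LipschitzWith L φ →
      ∀ h : EuclideanSpace ℝ (Fin n) → ℝ, Integrable h →
      Integrable (fun x => lineDeriv ℝ φ x e * h x) := by
    intro φ hφ h hh
    refine hh.bdd_mul (c := L * ‖e‖) (aestronglyMeasurable_lineDeriv hφ.continuous _) ?_
    exact Eventually.of_forall fun x => norm_lineDeriv_le_of_lipschitz ℝ hφ
  have key2 : ∀ (φ : EuclideanSpace ℝ (Fin n) → ℝ), LipschitzWith L φ →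
      ∀ h : EuclideanSpace ℝ (Fin n) → ℝ, Integrable h →
      |∫ x, lineDeriv ℝ φ x e * h x| ≤ (L * ‖e‖) * ∫ x, ‖h x‖ := by
    intro φ hφ h hh
    rw [← Real.norm_eq_abs, ← integral_const_mul]
    apply norm_integral_le_of_norm_le (hh.norm.const_mul _)
    refine Eventually.of_forall fun x => ?_
    rw [norm_mul]
    gcongr
    exact norm_lineDeriv_le_of_lipschitz ℝ hφ
  rw [Metric.tendsto_atTop]
  intro ε hε
  obtain ⟨η, hη, hηε⟩ : ∃ η > 0, (L * ‖e‖) * η < ε / 3 := by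
    have : 0 ≤ L * ‖e‖ := by positivity
    refine ⟨ε / 3 / (L * ‖e‖ + 1), by positivity, ?_⟩
    rw [mul_div_assoc', div_lt_iff₀ (by positivity)]
    nlinarith
  obtain ⟨g', hg'c, hg's, hg'⟩ := (memLp_one_iff_integrable.2 hg).exist_eLpNorm_sub_le
    (by simp) le_rfl hη
  have hg'1 : ContDiff ℝ 1 g' := hg's.of_le (by exact_mod_cast le_top)
  have hg'i : Integrable g' := hg's.continuous.integrable_of_hasCompactSupport hg'c
  have hd : ∫ x, ‖(g - g') x‖ ≤ η := by
    rw [eLpNorm_one_eq_lintegral_enorm] at hg'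
    rw [integral_norm_eq_lintegral_enorm (hg.sub hg'i).aestronglyMeasurable]
    exact ENNReal.toReal_le_of_le_ofReal hη.le hg'
  have hsplit : ∀ φ : EuclideanSpace ℝ (Fin n) → ℝ, LipschitzWith L φ →
      |(∫ x, lineDeriv ℝ φ x e * g x) - ∫ x, lineDeriv ℝ φ x e * g' x| < ε / 3 := by
    intro φ hφ
    rw [← integral_sub (key φ hφ g hg) (key φ hφ g' hg'i)]
    have := key2 φ hφ (g - g') (hg.sub hg'i)
    simp only [Pi.sub_apply, mul_sub] at this
    refine this.trans_lt (lt_of_le_of_lt ?_ hηε)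
    gcongr
    exact hd
  have hs := aux_weak_smooth f f₀ hf hf₀ hc g' hg'1 hg'c e
  rw [Metric.tendsto_atTop] at hs
  obtain ⟨N, hN⟩ := hs (ε / 3) (by positivity)
  refine ⟨N, fun k hk => ?_⟩
  have h1 := hN k hk
  have h2 := hsplit (f k) (hf k)
  have h3 := hsplit f₀ hf₀
  rw [Real.dist_eq] at h1 ⊢
  rw [abs_lt] at *
  constructor <;> linarith [h1.1, h1.2, h2.1, h2.2, h3.1, h3.2]

theorem aux_grad_sq {n : ℕ} {f : EuclideanSpace ℝ (Fin n) → ℝ} {x : EuclideanSpace ℝ (Fin n)}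
    (hf : DifferentiableAt ℝ f x) :
    ‖gradient f x‖ ^ 2 = ∑ i, (lineDeriv ℝ f x (EuclideanSpace.single i 1)) ^ 2 := by
  rw [EuclideanSpace.norm_sq_eq]
  refine Finset.sum_congr rfl fun i _ => ?_
  rw [hf.lineDeriv_eq_fderiv]
  have h : fderiv ℝ f x (EuclideanSpace.single i 1)
      = inner ℝ (gradient f x) (EuclideanSpace.single i 1) := by
    rw [gradient, InnerProductSpace.toDual_symm_apply]
  rw [h, EuclideanSpace.inner_single_right]
  simp

theorem aux_lsc {n : ℕ} {L : ℝ≥0} (f : ℕ → EuclideanSpace ℝ (Fin n) → ℝ)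
    (f₀ : EuclideanSpace ℝ (Fin n) → ℝ) (hf : ∀ k, LipschitzWith L (f k))
    (hf₀ : LipschitzWith L f₀) (hc : ∀ x, Tendsto (fun k => f k x) atTop (nhds (f₀ x)))
    (U : Set (EuclideanSpace ℝ (Fin n))) (hU : MeasurableSet U) (hUf : volume U ≠ ∞) :
    ∫⁻ x in U, (‖gradient f₀ x‖₊ : ℝ≥0∞) ^ 2 ≤
      liminf (fun k => ∫⁻ x in U, (‖gradient (f k) x‖₊ : ℝ≥0∞) ^ 2) atTop := by
  have : IsFiniteMeasure (volume.restrict U) := ⟨by simpa using hUf.lt_top⟩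
  set D : (EuclideanSpace ℝ (Fin n) → ℝ) → Fin n → EuclideanSpace ℝ (Fin n) → ℝ :=
    fun φ i x => lineDeriv ℝ φ x (EuclideanSpace.single i 1) with hD
  have hDm : ∀ φ, LipschitzWith L φ → ∀ i, Measurable (D φ i) := fun φ hφ i =>
    measurable_lineDeriv hφ.continuous
  have hDb : ∀ φ, LipschitzWith L φ → ∀ i x, ‖D φ i x‖ ≤ L := fun φ hφ i x => by
    have := norm_lineDeriv_le_of_lipschitz ℝ hφ (x₀ := x) (v := EuclideanSpace.single i (1:ℝ))
    simpa using this
  have hDi : ∀ φ, LipschitzWith L φ → ∀ i, Integrable (D φ i) (volume.restrict U) :=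
    fun φ hφ i => Integrable.of_bound (hDm φ hφ i).aestronglyMeasurable L
      (Eventually.of_forall (hDb φ hφ i))
  have hDDi : ∀ φ, LipschitzWith L φ → ∀ ψ, LipschitzWith L ψ → ∀ i,
      Integrable (fun x => D φ i x * D ψ i x) (volume.restrict U) := fun φ hφ ψ hψ i =>
    (hDi ψ hψ i).bdd_mul (hDm φ hφ i).aestronglyMeasurable (Eventually.of_forall (hDb φ hφ i))
  have hlint : ∀ φ, LipschitzWith L φ → ∫⁻ x in U, (‖gradient φ x‖₊ : ℝ≥0∞) ^ 2 =
      ENNReal.ofReal (∑ i, ∫ x in U, D φ i x * D φ i x) := by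
    intro φ hφ
    rw [← integral_finsetSum _ (fun i _ => hDDi φ hφ φ hφ i),
      ofReal_integral_eq_lintegral_ofReal (integrable_finsetSum _ fun i _ => hDDi φ hφ φ hφ i)]
    · apply lintegral_congr_ae
      filter_upwards [ae_restrict_of_ae hφ.ae_differentiableAt] with x hx
      have := aux_grad_sq hx
      simp only [← pow_two, hD]
      rw [← this, ENNReal.ofReal_pow (norm_nonneg _), ofReal_norm]
      rfl
    · exact Eventually.of_forall fun x => Finset.sum_nonneg fun i _ => mul_self_nonneg _
  have hS : Tendsto (fun k => ∑ i, ∫ x in U, D (f k) i x * D f₀ i x) atTop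
      (nhds (∑ i, ∫ x in U, D f₀ i x * D f₀ i x)) := by
    refine tendsto_finsetSum _ fun i _ => ?_
    have h := aux_weak f f₀ hf hf₀ hc (U.indicator (D f₀ i))
      ((integrable_indicator_iff hU).2 (hDi f₀ hf₀ i)) (EuclideanSpace.single i 1)
    have hr : ∀ φ : EuclideanSpace ℝ (Fin n) → ℝ,
        ∫ x, lineDeriv ℝ φ x (EuclideanSpace.single i 1) * U.indicator (D f₀ i) x
        = ∫ x in U, D φ i x * D f₀ i x := by
      intro φ
      rw [← integral_indicator hU]
      congr 1
      ext x
      by_cases hx : x ∈ U <;> simp [hx, hD]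
    simpa only [hr] using h
  rw [hlint f₀ hf₀]
  set A := ∑ i, ∫ x in U, D f₀ i x * D f₀ i x
  have hT : Tendsto (fun k => ENNReal.ofReal (2 * (∑ i, ∫ x in U, D (f k) i x * D f₀ i x) - A))
      atTop (nhds (ENNReal.ofReal A)) := by
    apply ENNReal.tendsto_ofReal
    have := (hS.const_mul 2).sub_const A
    convert this using 2
    ring
  rw [← hT.liminf_eq]
  refine liminf_le_liminf (Eventually.of_forall fun k => ?_)
  rw [hlint (f k) (hf k)]
  apply ENNReal.ofReal_le_ofReal
  rw [Finset.mul_sum, ← Finset.sum_sub_distrib]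
  refine Finset.sum_le_sum fun i _ => ?_
  rw [← integral_const_mul, ← integral_sub ((hDDi _ (hf k) _ hf₀ i).const_mul 2)
    (hDDi _ hf₀ _ hf₀ i)]
  apply integral_mono (((hDDi _ (hf k) _ hf₀ i).const_mul 2).sub
    (hDDi _ hf₀ _ hf₀ i)) (hDDi _ (hf k) _ (hf k) i)
  intro x
  simp only [Pi.sub_apply]
  nlinarith [sq_nonneg (D (f k) i x - D f₀ i x)]

theorem aux_clamp (n : ℕ) (R : ℝ) (hR : 0 ≤ R) :
    ∃ P : EuclideanSpace ℝ (Fin n) → EuclideanSpace ℝ (Fin n), LipschitzWith 1 P ∧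
      (∃ K, IsCompact K ∧ ∀ x, P x ∈ K) ∧ ∀ x, ‖x‖ ≤ R → P x = x := by
  have hP : LipschitzWith 1 (fun x : EuclideanSpace ℝ (Fin n) =>
      (WithLp.toLp 2 fun i => max (-R) (min R (x i)) : EuclideanSpace ℝ (Fin n))) := by
    apply LipschitzWith.of_dist_le_mul
    intro x y
    rw [NNReal.coe_one, one_mul, EuclideanSpace.dist_eq, EuclideanSpace.dist_eq]
    apply Real.sqrt_le_sqrt
    refine Finset.sum_le_sum fun i _ => ?_
    gcongr
    have h : LipschitzWith 1 (fun t : ℝ => max (-R) (min R t)) :=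
      (LipschitzWith.id.const_min R).const_max (-R)
    simpa using h.dist_le_mul (x i) (y i)
  refine ⟨_, hP, ⟨closedBall 0 (√(∑ _i : Fin n, R ^ 2)), isCompact_closedBall _ _, ?_⟩, ?_⟩
  · intro x
    rw [mem_closedBall_zero_iff, EuclideanSpace.norm_eq]
    apply Real.sqrt_le_sqrt
    refine Finset.sum_le_sum fun i _ => ?_
    rw [Real.norm_eq_abs, sq_abs]
    apply sq_le_sq'
    · exact le_max_left _ _
    · exact max_le (by linarith) (min_le_left _ _)
  · intro x hx
    ext i
    have h1 := (PiLp.norm_apply_le x i).trans hx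
    rw [Real.norm_eq_abs, abs_le] at h1
    simp [h1.1, h1.2]

theorem aux_liminf_add (a b : ℕ → ℝ≥0∞) :
    liminf a atTop + liminf b atTop ≤ liminf (fun k => a k + b k) atTop := by
  simp only [liminf_eq_iSup_iInf_of_nat]
  refine ENNReal.iSup_add_iSup_le fun i j => ?_
  refine le_iSup_of_le (max i j) ?_
  refine le_iInf₂ fun k hk => ?_
  gcongr
  · exact iInf₂_le k (le_trans (le_max_left _ _) hk)
  · exact iInf₂_le k (le_trans (le_max_right _ _) hk)

theorem aux_lip_limit {n : ℕ} {L : ℝ≥0} {K : Set (EuclideanSpace ℝ (Fin n))}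
    (u : ℕ → EuclideanSpace ℝ (Fin n) → ℝ) (v : EuclideanSpace ℝ (Fin n) → ℝ)
    (hu : ∀ k, LipschitzOnWith L (u k) K)
    (hc : ∀ x, Tendsto (fun k => u k x) atTop (nhds (v x))) : LipschitzOnWith L v K := by
  apply LipschitzOnWith.of_dist_le_mul
  intro x hx y hy
  exact le_of_tendsto ((hc x).dist (hc y))
    (Eventually.of_forall fun k => (hu k).dist_le_mul x hx y hy)

theorem aux_unif {n : ℕ} {L : ℝ≥0} {K : Set (EuclideanSpace ℝ (Fin n))} (hK : IsCompact K)
    (u : ℕ → EuclideanSpace ℝ (Fin n) → ℝ) (v : EuclideanSpace ℝ (Fin n) → ℝ)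
    (hu : ∀ k, LipschitzOnWith L (u k) K)
    (hc : ∀ x, Tendsto (fun k => u k x) atTop (nhds (v x))) (ε : ℝ) (hε : 0 < ε) :
    ∀ᶠ k in atTop, ∀ x ∈ K, |u k x - v x| ≤ ε := by
  have hv := aux_lip_limit u v hu hc
  have hρ : 0 < ε / (3 * (L + 1)) := by positivity
  obtain ⟨t, htK, htf, ht⟩ := hK.finite_cover_balls hρ
  have h1 : ∀ᶠ k in atTop, ∀ y ∈ t, |u k y - v y| < ε / 3 := by
    rw [htf.eventually_all]
    intro y _
    have := (Metric.tendsto_nhds.1 (hc y)) (ε / 3) (by positivity)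
    simpa only [Real.dist_eq] using this
  filter_upwards [h1] with k hk x hx
  obtain ⟨y, hy, hxy⟩ := mem_iUnion₂.1 (ht hx)
  have h2 := (hu k).dist_le_mul x hx y (htK hy)
  have h3 := hv.dist_le_mul x hx y (htK hy)
  have h4 := hk y hy
  have h5 : L * dist x y ≤ ε / 3 := by
    rw [mem_ball] at hxy
    have : (L : ℝ) * dist x y ≤ (L + 1) * (ε / (3 * (L + 1))) := by
      gcongr
      linarith
    refine this.trans (le_of_eq ?_)
    field_simp
  rw [Real.dist_eq] at h2 h3
  have e : u k x - v x = (u k x - u k y) + (u k y - v y) + -(v x - v y) := by ring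
  rw [e]
  have := abs_add_three (u k x - u k y) (u k y - v y) (-(v x - v y))
  rw [abs_neg] at this
  linarith

theorem aux_locLip_mul {n : ℕ} {f g : EuclideanSpace ℝ (Fin n) → ℝ} (hf : LocallyLipschitz f)
    (hg : LocallyLipschitz g) : LocallyLipschitz (fun x => f x * g x) := by
  have hm : LocallyLipschitz (fun p : ℝ × ℝ => p.1 * p.2) :=
    ContDiff.locallyLipschitz (𝕂 := ℝ) (by fun_prop)
  exact hm.comp (hf.prodMk hg)

theorem aux_grad_norm {n : ℕ} (f : EuclideanSpace ℝ (Fin n) → ℝ)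
    (x : EuclideanSpace ℝ (Fin n)) : ‖gradient f x‖₊ = ‖fderiv ℝ f x‖₊ := by
  simp [gradient]

theorem aux_meas {n : ℕ} (f : EuclideanSpace ℝ (Fin n) → ℝ) :
    Measurable fun x => (‖gradient f x‖₊ : ℝ≥0∞) ^ 2 := by
  simp_rw [aux_grad_norm]
  have := measurable_fderiv ℝ f
  exact this.nnnorm.coe_nnreal_ennreal.pow_const 2

theorem aux_meas_ind {n : ℕ} (f : EuclideanSpace ℝ (Fin n) → ℝ) (hf : Continuous f) :
    Measurable fun x => (if 0 < f x then (1 : ℝ≥0∞) else 0) :=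
  Measurable.ite (measurableSet_lt measurable_const hf.measurable)
    measurable_const measurable_const

theorem aux_grad_congr {n : ℕ} {f g : EuclideanSpace ℝ (Fin n) → ℝ}
    {x : EuclideanSpace ℝ (Fin n)} (h : f =ᶠ[nhds x] g) : gradient f x = gradient g x := by
  rw [gradient, gradient, h.fderiv_eq]

/-- Lower semicontinuity of the energy. -/
theorem aux_JE_lsc {n : ℕ} (U : Set (EuclideanSpace ℝ (Fin n))) (hU : IsOpen U)
    (hUb : Bornology.IsBounded U)
    (u : ℕ → EuclideanSpace ℝ (Fin n) → ℝ) (hucont : ∀ k, Continuous (u k))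
    (hlip : ∀ K : Set (EuclideanSpace ℝ (Fin n)), IsCompact K →
      ∃ L : ℝ≥0, ∀ k, LipschitzOnWith L (u k) K)
    (v : EuclideanSpace ℝ (Fin n) → ℝ)
    (hconv : ∀ x, Tendsto (fun k => u k x) atTop (nhds (v x))) :
    JE U v ≤ liminf (fun k => JE U (u k)) atTop := by
  obtain ⟨R, hR0, hR⟩ : ∃ R : ℝ, 0 ≤ R ∧ ∀ x ∈ U, ‖x‖ ≤ R := by
    obtain ⟨R, hR⟩ := hUb.exists_norm_le
    exact ⟨max R 0, le_max_right _ _, fun x hx => (hR x hx).trans (le_max_left _ _)⟩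
  obtain ⟨P, hP, ⟨K, hK, hPK⟩, hPid⟩ := aux_clamp n R hR0
  obtain ⟨L, hL⟩ := hlip K hK
  have hcomp : ∀ φ : EuclideanSpace ℝ (Fin n) → ℝ, LipschitzOnWith L φ K →
      LipschitzWith L (φ ∘ P) := by
    intro φ hφ
    rw [← lipschitzOnWith_univ, ← mul_one L]
    exact hφ.comp (hP.lipschitzOnWith (s := univ)) (fun x _ => hPK x)
  have hgr : ∀ φ : EuclideanSpace ℝ (Fin n) → ℝ, ∀ x ∈ U,
      gradient (φ ∘ P) x = gradient φ x := by
    intro φ x hx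
    apply aux_grad_congr
    filter_upwards [hU.mem_nhds hx] with y hy
    simp [hPid y (hR y hy)]
  have hlsc := aux_lsc (fun k => u k ∘ P) (v ∘ P) (fun k => hcomp _ (hL k))
    (hcomp _ (aux_lip_limit u v hL hconv)) (fun x => hconv (P x)) U hU.measurableSet
    hUb.measure_lt_top.ne
  have hrw : ∀ φ : EuclideanSpace ℝ (Fin n) → ℝ,
      ∫⁻ x in U, (‖gradient (φ ∘ P) x‖₊ : ℝ≥0∞) ^ 2 = ∫⁻ x in U, (‖gradient φ x‖₊ : ℝ≥0∞) ^ 2 :=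
    fun φ => setLIntegral_congr_fun hU.measurableSet fun x hx => by simp only [hgr φ x hx]
  simp only [hrw] at hlsc
  simp only [JE]
  simp_rw [lintegral_add_left (aux_meas _)]
  refine le_trans (add_le_add hlsc ?_) (aux_liminf_add _ _)
  refine le_trans ?_ (lintegral_liminf_le fun k => aux_meas_ind (u k) (hucont k))
  refine lintegral_mono fun x => ?_
  by_cases hx : 0 < v x
  · simp only [hx, if_true]
    apply le_liminf_of_le
    · isBoundedDefault
    filter_upwards [(hconv x).eventually (lt_mem_nhds hx)] with k hk
    simp [hk]
  · simp [hx]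

/-- Upper bound for the energy of the minimizers. -/
theorem aux_upper {n : ℕ} (hn : 2 ≤ n) (Ω : Set (EuclideanSpace ℝ (Fin n))) (hΩ : IsOpen Ω)
    (u : ℕ → EuclideanSpace ℝ (Fin n) → ℝ)
    (hmin : ∀ k, IsMinimizer Ω (u k))
    (hlip : ∀ K : Set (EuclideanSpace ℝ (Fin n)), IsCompact K →
      ∃ L : ℝ≥0, ∀ k, LipschitzOnWith L (u k) K)
    (v : EuclideanSpace ℝ (Fin n) → ℝ)
    (hconv : ∀ x, Tendsto (fun k => u k x) atTop (nhds (v x)))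
    (w : EuclideanSpace ℝ (Fin n) → ℝ) (hw0 : ∀ x, 0 ≤ w x) (hw : LocallyLipschitz w)
    (hwΩ : {x | w x ≠ v x} ⊆ Ω) (c : EuclideanSpace ℝ (Fin n)) (r : ℝ)
    (hwB : {x | w x ≠ v x} ⊆ Metric.ball c r) :
    ∃ C : ℝ≥0, ∀ δ : ℝ, 0 < δ → δ ≤ 1 → ∀ᶠ k in atTop,
      JE (Ω ∩ Metric.ball c r) (u k) ≤ JE (Ω ∩ Metric.ball c r) w +
        ((C : ℝ≥0∞) ^ 2 + 1) * volume (Ω ∩ Metric.ball c r ∩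
          {x | infDist x (Ω ∩ Metric.ball c r)ᶜ ≤ 2 * δ}) := by
  have : Nonempty (Fin n) := ⟨⟨0, by omega⟩⟩
  set U := Ω ∩ Metric.ball c r with hUdef
  have hU : IsOpen U := hΩ.inter isOpen_ball
  have hUc : Uᶜ.Nonempty := by
    rw [nonempty_compl]
    intro h
    apply NormedSpace.unbounded_univ ℝ (EuclideanSpace ℝ (Fin n))
    rw [← h]
    exact isBounded_ball.subset inter_subset_right
  set K := closedBall c (r + 3) with hKdef
  have hK : IsCompact K := isCompact_closedBall _ _
  obtain ⟨L, hL⟩ := hlip K hK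
  obtain ⟨L', hL'⟩ := (hw.locallyLipschitzOn (s := K)).exists_lipschitzOnWith_of_compact hK
  have hvL := aux_lip_limit u v hL hconv
  have hUK : U ⊆ K := fun x hx => by
    have := mem_ball.1 hx.2
    exact mem_closedBall.2 (by linarith)
  set d : EuclideanSpace ℝ (Fin n) → ℝ := fun x => infDist x Uᶜ with hd
  have hdlip : LipschitzWith 1 d := lipschitz_infDist_pt _
  -- `w - v` is controlled by the distance
  have hwv : ∀ δ : ℝ, 0 < δ → δ ≤ 1 → ∀ x ∈ U, d x < 3 * δ →
      |w x - v x| ≤ (L' + L) * (3 * δ) := by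
    intro δ hδ hδ1 x hx hdx
    obtain ⟨z, hz, hxz⟩ := (infDist_lt_iff hUc).1 hdx
    have hwz : w z = v z := by
      by_contra hne
      exact hz ⟨hwΩ hne, hwB hne⟩
    have hzK : z ∈ K := by
      have h1 := mem_ball.1 hx.2
      have h2 := dist_triangle_left z c x
      exact mem_closedBall.2 (by linarith)
    have h1 := hL'.dist_le_mul x (hUK hx) z hzK
    have h2 := hvL.dist_le_mul x (hUK hx) z hzK
    rw [Real.dist_eq] at h1 h2
    have e : w x - v x = (w x - w z) - (v x - v z) := by rw [hwz]; ring
    rw [e]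
    have h3 := abs_sub (w x - w z) (v x - v z)
    have h4 : (L' + L : ℝ) * dist x z ≤ (L' + L) * (3 * δ) := by gcongr
    linarith
  refine ⟨L + (L' + L) + ((L' + L) * 3 + 1), fun δ hδ hδ1 => ?_⟩
  filter_upwards [aux_unif hK u v hL hconv δ hδ] with k hk
  -- the cutoff
  set η : EuclideanSpace ℝ (Fin n) → ℝ := fun x => max 0 (min 1 (d x / δ - 1)) with hη
  have hη0 : ∀ x, 0 ≤ η x := fun x => le_max_left _ _
  have hη1 : ∀ x, η x ≤ 1 := fun x => max_le zero_le_one (min_le_left _ _)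
  have hηlip : ∀ x y, |η x - η y| ≤ dist x y / δ := by
    intro x y
    have h : LipschitzWith 1 (fun t : ℝ => max 0 (min 1 t)) :=
      (LipschitzWith.id.const_min 1).const_max 0
    have h1 := h.dist_le_mul (d x / δ - 1) (d y / δ - 1)
    have h2 := hdlip.dist_le_mul x y
    simp only [Real.dist_eq, NNReal.coe_one, one_mul] at h1 h2
    refine h1.trans ?_
    rw [show d x / δ - 1 - (d y / δ - 1) = (d x - d y) / δ by ring, abs_div, abs_of_pos hδ]
    gcongr
  have hηL : LocallyLipschitz η := by
    have : LipschitzWith (Real.toNNReal (1 / δ)) η := by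
      apply LipschitzWith.of_dist_le_mul
      intro x y
      rw [Real.dist_eq, Real.coe_toNNReal _ (by positivity)]
      exact (hηlip x y).trans (le_of_eq (by ring))
    exact this.locallyLipschitz
  have hηz : ∀ x, d x ≤ δ → η x = 0 := by
    intro x hx
    have : d x / δ ≤ 1 := (div_le_one hδ).2 hx
    apply max_eq_left
    exact (min_le_right _ _).trans (by linarith)
  have hηo : ∀ x, 2 * δ ≤ d x → η x = 1 := by
    intro x hx
    have : 2 ≤ d x / δ := (le_div_iff₀ hδ).2 hx
    simp only [hη]
    rw [min_eq_left (by linarith)]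
    simp
  set W : EuclideanSpace ℝ (Fin n) → ℝ := fun x => u k x + η x * (w x - u k x) with hW
  obtain ⟨hk0, hkL, hkmin⟩ := hmin k
  have hW0 : ∀ x, 0 ≤ W x := by
    intro x
    have : W x = (1 - η x) * u k x + η x * w x := by simp only [hW]; ring
    rw [this]
    exact add_nonneg (mul_nonneg (by linarith [hη1 x]) (hk0 x)) (mul_nonneg (hη0 x) (hw0 x))
  have hWL : LocallyLipschitz W := hkL.add (aux_locLip_mul hηL (hw.sub hkL))
  have hWne : {x | W x ≠ u k x} ⊆ U := by
    intro x hx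
    by_contra hxU
    apply hx
    have : d x = 0 := infDist_zero_of_mem hxU
    simp only [hW]
    rw [hηz x (by rw [this]; exact hδ.le)]
    ring
  refine (hkmin W hW0 hWL (isBounded_ball.subset (hWne.trans inter_subset_right))
    (hWne.trans inter_subset_left) c r (hWne.trans inter_subset_right)).trans ?_
  rw [← hUdef]
  -- gradient bound near the boundary
  set C : ℝ≥0 := L + (L' + L) + ((L' + L) * 3 + 1) with hC
  have hWlip : LipschitzOnWith C W (U ∩ {x | d x < 3 * δ}) := by
    apply LipschitzOnWith.of_dist_le_mul
    rintro x ⟨hx, hdx⟩ y ⟨hy, hdy⟩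
    rw [Real.dist_eq]
    have h1 := (hL k).dist_le_mul x (hUK hx) y (hUK hy)
    have h2 := hL'.dist_le_mul x (hUK hx) y (hUK hy)
    rw [Real.dist_eq] at h1 h2
    have h3 : |w y - u k y| ≤ ((L' + L) * 3 + 1) * δ := by
      have a1 := hwv δ hδ hδ1 y hy hdy
      have a2 := hk y (hUK hy)
      have a3 := abs_sub_le (w y) (v y) (u k y)
      rw [abs_sub_comm] at a2
      linarith
    have h4 : |(η x - η y) * (w y - u k y)| ≤ ((L' + L) * 3 + 1) * dist x y := by
      rw [abs_mul]
      calc |η x - η y| * |w y - u k y| ≤ (dist x y / δ) * (((L' + L) * 3 + 1) * δ) := by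
            gcongr
            exact hηlip x y
        _ = ((L' + L) * 3 + 1) * dist x y := by field_simp
    have h5 : |η x * ((w x - w y) - (u k x - u k y))| ≤ (L' + L) * dist x y := by
      rw [abs_mul, abs_of_nonneg (hη0 x)]
      have b1 := abs_sub (w x - w y) (u k x - u k y)
      calc η x * |(w x - w y) - (u k x - u k y)| ≤ 1 * ((L' + L) * dist x y) := by
            gcongr
            · exact hη1 x
            · linarith
        _ = _ := one_mul _
    have e : W x - W y = (u k x - u k y) + η x * ((w x - w y) - (u k x - u k y))
        + (η x - η y) * (w y - u k y) := by simp only [hW]; ring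
    rw [e]
    refine (abs_add_three _ _ _).trans ?_
    rw [hC]
    push_cast
    linarith
  set S : Set (EuclideanSpace ℝ (Fin n)) := {x | d x ≤ 2 * δ} with hS
  have hSm : MeasurableSet S := measurableSet_le hdlip.continuous.measurable measurable_const
  have hbound : ∀ x ∈ U, ((‖gradient W x‖₊ : ℝ≥0∞) ^ 2 + if 0 < W x then 1 else 0) ≤
      ((‖gradient w x‖₊ : ℝ≥0∞) ^ 2 + if 0 < w x then 1 else 0) +
        S.indicator (fun _ => (C : ℝ≥0∞) ^ 2 + 1) x := by
    intro x hx
    by_cases hxS : x ∈ S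
    · rw [indicator_of_mem hxS]
      refine le_trans ?_ le_add_self
      have hmem : U ∩ {x | d x < 3 * δ} ∈ nhds x := by
        apply IsOpen.mem_nhds
        · exact hU.inter (isOpen_lt hdlip.continuous continuous_const)
        · refine ⟨hx, ?_⟩
          have : d x ≤ 2 * δ := hxS
          show d x < 3 * δ
          linarith
      have hg := norm_fderiv_le_of_lipschitzOn ℝ hmem hWlip
      rw [aux_grad_norm]
      gcongr
      · exact hg
      · split_ifs <;> simp
    · rw [indicator_of_notMem hxS, add_zero]
      have hdx : 2 * δ < d x := not_le.1 hxS
      have heq : ∀ y, 2 * δ < d y → W y = w y := by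
        intro y hy
        simp only [hW]
        rw [hηo y hy.le]
        ring
      have hev : W =ᶠ[nhds x] w := by
        filter_upwards [(isOpen_lt continuous_const hdlip.continuous).mem_nhds hdx] with y hy
        exact heq y hy
      rw [aux_grad_congr hev, heq x hdx]
  calc JE U W ≤ ∫⁻ x in U, (((‖gradient w x‖₊ : ℝ≥0∞) ^ 2 + if 0 < w x then 1 else 0) +
        S.indicator (fun _ => (C : ℝ≥0∞) ^ 2 + 1) x) :=
      setLIntegral_mono' hU.measurableSet hbound
    _ = JE U w + ((C : ℝ≥0∞) ^ 2 + 1) * volume (U ∩ S) := by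
      rw [lintegral_add_right _ (measurable_const.indicator hSm), lintegral_indicator_const hSm,
        Measure.restrict_apply hSm, inter_comm S U]
      rfl

/-- compactness of minimizers — a locally uniformly Lipschitz pointwise limit
of minimizers is a (nonnegative, locally Lipschitz) minimizer. -/
theorem stmt7 {n : ℕ} (hn : 2 ≤ n) (Ω : Set (EuclideanSpace ℝ (Fin n))) (hΩ : IsOpen Ω)
    (u : ℕ → EuclideanSpace ℝ (Fin n) → ℝ)
    (hmin : ∀ k, IsMinimizer Ω (u k))
    (hlip : ∀ K : Set (EuclideanSpace ℝ (Fin n)), IsCompact K →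
      ∃ L : ℝ≥0, ∀ k, LipschitzOnWith L (u k) K)
    (v : EuclideanSpace ℝ (Fin n) → ℝ)
    (hconv : ∀ x, Tendsto (fun k => u k x) atTop (nhds (v x))) :
    IsMinimizer Ω v := by
  refine ⟨fun x => ge_of_tendsto' (hconv x) fun k => (hmin k).1 x, ?_, ?_⟩
  · intro x
    obtain ⟨L, hL⟩ := hlip (closedBall x 1) (isCompact_closedBall _ _)
    exact ⟨L, closedBall x 1, closedBall_mem_nhds x one_pos, aux_lip_limit u v hL hconv⟩
  intro w hw0 hw _ hwΩ c r hwB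
  obtain ⟨C, hC⟩ := aux_upper hn Ω hΩ u hmin hlip v hconv w hw0 hw hwΩ c r hwB
  set U := Ω ∩ Metric.ball c r with hUdef
  have hU : IsOpen U := hΩ.inter isOpen_ball
  have hUb : Bornology.IsBounded U := isBounded_ball.subset inter_subset_right
  have hUc : Uᶜ.Nonempty := by
    have : Nonempty (Fin n) := ⟨⟨0, by omega⟩⟩
    rw [nonempty_compl]
    intro h
    apply NormedSpace.unbounded_univ ℝ (EuclideanSpace ℝ (Fin n))
    rw [← h]
    exact hUb
  refine (aux_JE_lsc U hU hUb u (fun k => (hmin k).2.1.continuous) hlip v hconv).trans ?_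
  set T : ℕ → Set (EuclideanSpace ℝ (Fin n)) := fun m =>
    U ∩ {x | infDist x Uᶜ ≤ 2 * (1 / ((m : ℝ) + 1))} with hT
  have hle : ∀ m : ℕ, liminf (fun k => JE U (u k)) atTop ≤
      JE U w + ((C : ℝ≥0∞) ^ 2 + 1) * volume (T m) := by
    intro m
    have h1 : (1 : ℝ) / ((m : ℝ) + 1) ≤ 1 := by
      rw [div_le_one (by positivity)]
      have : (0 : ℝ) ≤ m := by positivity
      linarith
    exact liminf_le_of_frequently_le' (hC (1 / ((m : ℝ) + 1)) (by positivity) h1).frequently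
  have hTm : Tendsto (fun m => volume (T m)) atTop (nhds 0) := by
    have hemp : ⋂ m, T m = ∅ := by
      rw [eq_empty_iff_forall_notMem]
      intro x hx
      rw [mem_iInter] at hx
      have hxU : x ∈ U := (hx 0).1
      have hpos : 0 < infDist x Uᶜ :=
        (hU.isClosed_compl.notMem_iff_infDist_pos hUc).1 (by simpa using hxU)
      obtain ⟨m, hm⟩ := exists_nat_one_div_lt (half_pos hpos)
      have : infDist x Uᶜ ≤ 2 * (1 / ((m : ℝ) + 1)) := (hx m).2
      linarith
    rw [← measure_empty (μ := (volume : Measure (EuclideanSpace ℝ (Fin n)))), ← hemp]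
    apply tendsto_measure_iInter_atTop
    · intro m
      exact (hU.measurableSet.inter (measurableSet_le (continuous_infDist_pt _).measurable
        measurable_const)).nullMeasurableSet
    · intro a b hab x hx
      have hx2 : infDist x Uᶜ ≤ 2 * (1 / ((b : ℝ) + 1)) := hx.2
      refine ⟨hx.1, mem_ofPred_eq ▸ hx2.trans ?_⟩
      have : (a : ℝ) ≤ b := by exact_mod_cast hab
      gcongr
    · exact ⟨0, ((measure_mono inter_subset_left).trans_lt hUb.measure_lt_top).ne⟩
  have hlim : Tendsto (fun m => JE U w + ((C : ℝ≥0∞) ^ 2 + 1) * volume (T m)) atTop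
      (nhds (JE U w + ((C : ℝ≥0∞) ^ 2 + 1) * 0)) := by
    apply Tendsto.const_add
    apply ENNReal.Tendsto.const_mul hTm
    right
    exact ENNReal.add_ne_top.2 ⟨ENNReal.pow_ne_top ENNReal.coe_ne_top, ENNReal.one_ne_top⟩
  rw [mul_zero, add_zero] at hlim
  exact ge_of_tendsto' hlim hle
end

section
/- Compactness of minimizers (convergence of indicators and gradients): let Ω ⊆ ℝⁿ be open and let (u_k) be a sequence of minimizers of J in Ω which is locally uniformly Lipschitz (for every compact K ⊆ ℝⁿ there is L such that every u_k is L-Lipschitz on K) and converges pointwise to a function u. Then: (a) for every compact K ⊆ Ω, ∫_K |𝟙_{{u_k>0}} − 𝟙_{{u>0}}| dx → 0 as k → ∞; and (b) ∇u_k(x) → ∇u(x) for almost every x ∈ Ω. -/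
open MeasureTheory Metric Set Filter ENNReal NNReal

abbrev ES (n : ℕ) := EuclideanSpace ℝ (Fin n)

lemma locLip_ae_diff {n : ℕ} {f : ES n → ℝ} (hf : LocallyLipschitz f) :
    ∀ᵐ x, DifferentiableAt ℝ f x := by
  have h : ∀ m : ℕ, ∀ᵐ x, x ∈ closedBall (0 : ES n) m →
      DifferentiableWithinAt ℝ f (closedBall (0 : ES n) m) x := by
    intro m
    obtain ⟨C, hC⟩ := LocallyLipschitzOn.exists_lipschitzOnWith_of_compact
      (isCompact_closedBall (0 : ES n) m) (hf.locallyLipschitzOn)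
    exact hC.ae_differentiableWithinAt_of_mem
  rw [← ae_all_iff] at h
  filter_upwards [h] with x hx
  obtain ⟨m, hm⟩ := exists_nat_gt ‖x‖
  have h1 : x ∈ ball (0 : ES n) m := by simpa using hm
  exact (hx m (ball_subset_closedBall h1)).differentiableAt
    (mem_of_superset (isOpen_ball.mem_nhds h1) ball_subset_closedBall)

lemma norm_grad {n : ℕ} (f : ES n → ℝ) (x : ES n) : ‖gradient f x‖ = ‖fderiv ℝ f x‖ := by
  unfold gradient; simp

lemma grad_congr {n : ℕ} {f g : ES n → ℝ} {x : ES n} (h : f =ᶠ[nhds x] g) :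
    gradient f x = gradient g x := by
  unfold gradient; rw [h.fderiv_eq]

lemma JE_lt_top {n : ℕ} {u : ES n → ℝ} {L : ℝ≥0} {c : ES n} {r : ℝ}
    (hL : LipschitzOnWith L u (ball c r)) : JE (ball c r) u < ⊤ := by
  unfold JE
  calc _ ≤ ∫⁻ x in ball c r, ((L : ℝ≥0∞) ^ 2 + 1) := by
        apply setLIntegral_mono measurable_const
        intro x hx
        gcongr
        · have : ‖gradient u x‖ ≤ L := by
            rw [norm_grad]
            exact norm_fderiv_le_of_lipschitzOn ℝ (isOpen_ball.mem_nhds hx) hL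
          exact_mod_cast this
        · split_ifs <;> simp
    _ < ⊤ := by
        rw [setLIntegral_const]
        exact ENNReal.mul_lt_top (by finiteness) measure_ball_lt_top

/-- The decay lemma. -/
lemma decay {n : ℕ} {Ω : Set (ES n)} {u : ES n → ℝ} (hu : IsMinimizer Ω u) {L : ℝ≥0}
    {y : ES n} {r ε : ℝ} (hr : 0 < r) (hε : 0 < ε) (hΩ : ball y r ⊆ Ω)
    (hL : LipschitzOnWith L u (ball y r)) (hsup : ∀ z ∈ ball y r, u z ≤ ε * r) :
    volume ({z | 0 < u z} ∩ ball y (r / 2)) ≤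
      ENNReal.ofReal (4 * ε ^ 2) * volume ({z | 0 < u z} ∩ ball y r) := by
  obtain ⟨hu0, huL, hm⟩ := hu
  set M : ℝ := ε * r with hM
  have hMpos : 0 < M := mul_pos hε hr
  set w : ES n → ℝ := fun z => (2 * ε) * max (dist z y - r / 2) 0 with hw
  have hw0 : ∀ z, 0 ≤ w z := fun z => by simp only [hw]; positivity
  have hwLip : LipschitzWith (Real.toNNReal (2 * ε)) w := by
    apply LipschitzWith.of_dist_le_mul
    intro a b
    rw [Real.coe_toNNReal _ (by positivity), Real.dist_eq]
    simp only [hw]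
    rw [← mul_sub, abs_mul, abs_of_pos (by positivity : 0 < 2 * ε)]
    gcongr
    calc _ ≤ |(dist a y - r / 2) - (dist b y - r / 2)| := by
          have := abs_max_sub_max_le_abs (dist a y - r / 2) (dist b y - r / 2) 0
          exact this
      _ = |dist a y - dist b y| := by ring_nf
      _ ≤ dist a b := abs_dist_sub_le a b y
  set ut : ES n → ℝ := fun z => u z - max (min (u z) M - w z) 0 with hut
  have hutD : ∀ z ∈ ball y r, ut z = min (u z) (w z) := by
    intro z hz
    simp only [hut]
    rw [min_eq_left (hsup z hz)]
    rcases le_total (u z) (w z) with h | h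
    · rw [max_eq_right (by linarith), min_eq_left h]; ring
    · rw [max_eq_left (by linarith), min_eq_right h]; ring
  have hut0 : ∀ z, 0 ≤ ut z := by
    intro z
    simp only [hut]
    have := hu0 z
    have := hw0 z
    have := min_le_left (u z) M
    rcases le_total (min (u z) M - w z) 0 with h | h
    · rw [max_eq_right h]; linarith
    · rw [max_eq_left h]; linarith
  have hutL : LocallyLipschitz ut :=
    huL.sub (((huL.min_const M).sub hwLip.locallyLipschitz).max_const 0)
  have hsub : {z | ut z ≠ u z} ⊆ ball y r := by
    intro z hz
    by_contra hzr
    apply hz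
    simp only [mem_ball, not_lt] at hzr
    have : M ≤ w z := by
      simp only [hw, hM]
      have : r / 2 ≤ max (dist z y - r / 2) 0 := le_max_of_le_left (by linarith)
      nlinarith
    simp only [hut]
    rw [max_eq_right (by linarith [min_le_right (u z) M])]; ring
  have key := hm ut hut0 hutL (isBounded_ball.subset hsub) (hsub.trans hΩ) y r hsub
  rw [inter_eq_right.2 hΩ] at key
  have hfin := JE_lt_top hL
  have hucont : Continuous u := huL.continuous
  have hPm : MeasurableSet {z | 0 < u z} := (isOpen_lt continuous_const hucont).measurableSet
  set S1 := {z | 0 < u z} ∩ ball y (r / 2) with hS1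
  set S2 := {z | 0 < u z} ∩ ball y r with hS2
  have hS1m : MeasurableSet S1 := hPm.inter measurableSet_ball
  have hS2m : MeasurableSet S2 := hPm.inter measurableSet_ball
  have hpt : JE (ball y r) ut + volume S1 ≤
      JE (ball y r) u + ENNReal.ofReal (4 * ε ^ 2) * volume S2 := by
    have e1 : volume S1 = ∫⁻ z in ball y r, S1.indicator 1 z := by
      rw [lintegral_indicator_one hS1m, Measure.restrict_apply hS1m]
      congr 1
      rw [eq_comm, inter_eq_left]
      exact inter_subset_right.trans (ball_subset_ball (by linarith))
    have e2 : ENNReal.ofReal (4 * ε ^ 2) * volume S2 =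
        ∫⁻ z in ball y r, S2.indicator (fun _ => ENNReal.ofReal (4 * ε ^ 2)) z := by
      rw [lintegral_indicator_const hS2m, Measure.restrict_apply hS2m]
      congr 2
      rw [eq_comm, inter_eq_left]
      exact inter_subset_right
    rw [e1, e2]
    unfold JE
    rw [← lintegral_add_right _ (measurable_one.indicator hS1m),
      ← lintegral_add_right _ (measurable_const.indicator hS2m)]
    apply lintegral_mono_ae
    rw [ae_restrict_iff' measurableSet_ball]
    filter_upwards [locLip_ae_diff huL] with z hdz hz
    rcases le_or_gt (u z) (w z) with h | h
    · -- contact or below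
      have hz1 : z ∉ S1 := by
        rintro ⟨h1, h2⟩
        have : w z = 0 := by
          simp only [hw]
          rw [max_eq_right (by simp only [mem_ball] at h2; linarith)]; simp
        have h1' : 0 < u z := h1
        linarith
      have hval : ut z = u z := by rw [hutD z hz, min_eq_left h]
      have hg : ‖gradient ut z‖ ≤ ‖gradient u z‖ := by
        by_cases hd : DifferentiableAt ℝ ut z
        · have hmin : IsLocalMin (fun a => u a - ut a) z := by
            filter_upwards with a
            simp only [hut]
            have := le_max_right (min (u a) M - w a) 0
            linarith
          have h0 := hmin.fderiv_eq_zero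
          rw [fderiv_fun_sub hdz hd, sub_eq_zero] at h0
          rw [norm_grad, norm_grad, h0]
        · rw [gradient_eq_zero_of_not_differentiableAt hd]; simp
      rw [indicator_of_notMem hz1, hval, add_zero]
      refine le_trans ?_ (le_self_add)
      gcongr
      exact hg
    · have hup : 0 < u z := lt_of_le_of_lt (hw0 z) h
      have hzS2 : z ∈ S2 := ⟨hup, hz⟩
      rw [indicator_of_mem hzS2, if_pos hup]
      by_cases hz1 : z ∈ ball y (r / 2)
      · have hzS1 : z ∈ S1 := ⟨hup, hz1⟩
        have : ut =ᶠ[nhds z] fun _ => 0 := by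
          filter_upwards [isOpen_ball.mem_nhds hz1] with a ha
          rw [hutD a (ball_subset_ball (by linarith) ha)]
          have : w a = 0 := by
            simp only [hw]
            rw [max_eq_right (by simp only [mem_ball] at ha; linarith)]; simp
          rw [this, min_eq_right (hu0 a)]
        rw [grad_congr this, this.eq_of_nhds, indicator_of_mem hzS1]
        have : gradient (fun _ : ES n => (0 : ℝ)) z = 0 := by
          unfold gradient; simp
        rw [this]
        simp only [nnnorm_zero, ENNReal.coe_zero, lt_irrefl, if_false, Pi.one_apply]
        refine le_trans ?_ le_self_add
        refine le_trans ?_ le_add_self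
        simp
      · have : ut =ᶠ[nhds z] w := by
          filter_upwards [isOpen_ball.mem_nhds hz,
            (isOpen_lt hwLip.continuous hucont).mem_nhds h] with a ha ha'
          rw [hutD a ha, min_eq_right ha'.le]
        rw [grad_congr this, indicator_of_notMem (fun hh => hz1 hh.2), add_zero]
        have hg : ‖gradient w z‖ ≤ 2 * ε := by
          rw [norm_grad]
          have := norm_fderiv_le_of_lipschitz ℝ hwLip (x₀ := z)
          rwa [Real.coe_toNNReal _ (by positivity)] at this
        have hg2 : ((‖gradient w z‖₊ : ℝ≥0∞)) ^ 2 ≤ ENNReal.ofReal (4 * ε ^ 2) := by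
          rw [show 4 * ε ^ 2 = (2 * ε) ^ 2 by ring, ENNReal.ofReal_pow (by positivity)]
          gcongr
          rw [← enorm_eq_nnnorm, ← ofReal_norm]
          exact ENNReal.ofReal_le_ofReal hg
        calc _ ≤ ENNReal.ofReal (4 * ε ^ 2) + 1 := by
              gcongr
              split_ifs <;> simp
          _ ≤ _ := by
              rw [add_comm]
              gcongr
              exact le_add_self
  have h2 : JE (ball y r) u + volume S1 ≤
      JE (ball y r) u + ENNReal.ofReal (4 * ε ^ 2) * volume S2 :=
    (add_le_add_left key _).trans hpt
  exact (ENNReal.add_le_add_iff_left hfin.ne).1 h2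

lemma vol_ball {n : ℕ} (z : ES n) {s : ℝ} (hs : 0 < s) :
    volume (ball z s) = ENNReal.ofReal (s ^ n) * volume (ball (0 : ES n) 1) := by
  have := Measure.addHaar_ball_of_pos (volume : Measure (ES n)) z hs
  simpa using this

lemma nondeg_step {n : ℕ} {Ω : Set (ES n)} {u : ES n → ℝ} (hu : IsMinimizer Ω u) {L : ℝ≥0}
    (hL0 : 0 < L) {y : ES n} {r ε : ℝ} (hr : 0 < r) (hε : 0 < ε) (hεL : ε ≤ L)
    (hεn : 4 * ε ^ 2 ≤ (1 / 2) ^ n) (hΩ : ball y r ⊆ Ω)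
    (hL : LipschitzOnWith L u (ball y r)) (hsup : ∀ z ∈ ball y r, u z ≤ ε * r)
    (hm : volume ({z | 0 < u z} ∩ ball y r) <
      ENNReal.ofReal ((ε * r / (2 * L)) ^ n) * volume (ball (0 : ES n) 1)) :
    (∀ z ∈ ball y (r / 2), u z ≤ ε * (r / 2)) ∧
    volume ({z | 0 < u z} ∩ ball y (r / 2)) <
      ENNReal.ofReal ((ε * (r / 2) / (2 * L)) ^ n) * volume (ball (0 : ES n) 1) := by
  have hL0' : (0 : ℝ) < L := by exact_mod_cast hL0
  constructor
  · intro z hz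
    by_contra! hc
    have hs : 0 < ε * r / (2 * L) := by positivity
    have hs2 : ε * r / (2 * L) ≤ r / 2 := by
      rw [div_le_div_iff₀ (by positivity) (by positivity)]
      nlinarith
    rw [← vol_ball z hs] at hm
    refine absurd hm (not_lt.2 (measure_mono ?_))
    intro a ha
    have hay : a ∈ ball y r := by
      simp only [mem_ball] at *
      linarith [dist_triangle a z y]
    refine ⟨?_, hay⟩
    have hzy : z ∈ ball y r := ball_subset_ball (by linarith) hz
    have h1 := hL.dist_le_mul a hay z hzy
    rw [Real.dist_eq] at h1
    have h2 : L * dist a z < ε * (r / 2) := by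
      rw [mem_ball, lt_div_iff₀ (by positivity)] at ha
      linarith
    have h3 := (abs_le.1 h1).1
    show 0 < u a
    linarith
  · refine lt_of_le_of_lt (decay hu hr hε hΩ hL hsup) ?_
    have e : ENNReal.ofReal ((ε * (r / 2) / (2 * L)) ^ n) =
        ENNReal.ofReal ((1 / 2) ^ n) * ENNReal.ofReal ((ε * r / (2 * L)) ^ n) := by
      rw [← ENNReal.ofReal_mul (by positivity), ← mul_pow]
      congr 2
      ring
    rw [e, mul_assoc]
    refine lt_of_le_of_lt (mul_le_mul_left (ENNReal.ofReal_le_ofReal hεn) _) ?_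
    refine (ENNReal.mul_lt_mul_iff_right ?_ ENNReal.ofReal_ne_top).2 hm
    rw [Ne, ENNReal.ofReal_eq_zero, not_le]
    positivity

lemma nondeg {n : ℕ} {L : ℝ≥0} (hL0 : 0 < L) : ∃ ε : ℝ, 0 < ε ∧
    ∀ (Ω : Set (ES n)) (u : ES n → ℝ), IsMinimizer Ω u → ∀ (y : ES n) (r : ℝ), 0 < r →
      ball y r ⊆ Ω → LipschitzOnWith L u (ball y r) → (∀ z ∈ ball y r, u z ≤ ε * r) →
      u y = 0 := by
  have hL0' : (0 : ℝ) < L := by exact_mod_cast hL0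
  obtain ⟨ε, hε, hεL, hεn⟩ : ∃ ε : ℝ, 0 < ε ∧ ε ≤ L ∧ 4 * ε ^ 2 ≤ (1 / 2) ^ n := by
    have hp : (0 : ℝ) < (1 / 2) ^ n := by positivity
    have hp1 : ((1 : ℝ) / 2) ^ n ≤ 1 := pow_le_one₀ (by norm_num) (by norm_num)
    refine ⟨min (L : ℝ) ((1 / 2) ^ n / 4), by positivity, min_le_left _ _, ?_⟩
    have h1 := min_le_right (L : ℝ) ((1 / 2) ^ n / 4)
    have h2 : 0 < min (L : ℝ) ((1 / 2) ^ n / 4) := by positivity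
    nlinarith
  set κ : ℝ := (ε / (2 * L)) ^ n with hκ
  have hκ0 : 0 < κ := by positivity
  obtain ⟨δ, hδ, hδε, hδκ⟩ : ∃ δ : ℝ, 0 < δ ∧ δ ≤ ε / 2 ∧ 4 * δ ^ 2 * 2 ^ n < κ := by
    have hc : Tendsto (fun δ : ℝ => 4 * δ ^ 2 * 2 ^ n) (nhdsWithin 0 (Ioi 0)) (nhds 0) := by
      have : Continuous (fun δ : ℝ => 4 * δ ^ 2 * 2 ^ n) := by fun_prop
      have := this.tendsto 0
      simp only [ne_eq, OfNat.ofNat_ne_zero, not_false_eq_true, zero_pow, mul_zero,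
        zero_mul] at this
      exact this.mono_left nhdsWithin_le_nhds
    have h1 := hc.eventually (gt_mem_nhds hκ0)
    have h2 : ∀ᶠ δ : ℝ in nhdsWithin 0 (Ioi 0), δ ≤ ε / 2 :=
      nhdsWithin_le_nhds ((gt_mem_nhds (by positivity : (0 : ℝ) < ε / 2)).mono
        fun _ h => le_of_lt h)
    obtain ⟨δ, h1, h2, h3⟩ := (h1.and (h2.and self_mem_nhdsWithin)).exists
    exact ⟨δ, h3, h2, h1⟩
  refine ⟨δ, hδ, fun Ω u hu y R hR hΩ hL hsup => ?_⟩
  set r := R / 2 with hr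
  have hr0 : 0 < r := by positivity
  have main : ∀ j : ℕ, (∀ z ∈ ball y (r / 2 ^ j), u z ≤ ε * (r / 2 ^ j)) ∧
    volume ({z | 0 < u z} ∩ ball y (r / 2 ^ j)) <
      ENNReal.ofReal ((ε * (r / 2 ^ j) / (2 * L)) ^ n) * volume (ball (0 : ES n) 1) := by
    intro j
    induction j with
    | zero =>
      simp only [pow_zero, div_one]
      constructor
      · intro z hz
        have := hsup z (ball_subset_ball (by linarith) hz)
        nlinarith
      · refine lt_of_le_of_lt (decay hu hR hδ hΩ hL hsup) ?_
        refine lt_of_le_of_lt (mul_le_mul_right (measure_mono inter_subset_right) _) ?_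
        rw [vol_ball y hR, ← mul_assoc, ← ENNReal.ofReal_mul (by positivity)]
        refine (ENNReal.mul_lt_mul_iff_left (measure_ball_pos _ _ one_pos).ne'
          measure_ball_lt_top.ne).2 ?_
        rw [ENNReal.ofReal_lt_ofReal_iff (by positivity)]
        have e1 : (ε * r / (2 * L)) ^ n = κ * r ^ n := by
          rw [hκ, ← mul_pow]; congr 1; ring
        have e2 : R ^ n = 2 ^ n * r ^ n := by rw [← mul_pow]; congr 1; rw [hr]; ring
        rw [e1, e2, ← mul_assoc]
        gcongr
    | succ j ih =>
      have hrj : 0 < r / 2 ^ j := by positivity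
      have hle : r / 2 ^ j ≤ R :=
        (div_le_self hr0.le (one_le_pow₀ (by norm_num))).trans (by linarith)
      have := nondeg_step hu hL0 hrj hε hεL hεn ((ball_subset_ball hle).trans hΩ)
        (hL.mono (ball_subset_ball hle)) ih.1 ih.2
      have e : r / 2 ^ (j + 1) = r / 2 ^ j / 2 := by rw [pow_succ]; field_simp
      rw [e]
      exact this
  refine le_antisymm ?_ (hu.1 y)
  have hlim : Tendsto (fun j : ℕ => ε * (r / 2 ^ j)) atTop (nhds 0) := by
    have h1 := (tendsto_pow_atTop_nhds_zero_of_lt_one (r := (1 / 2 : ℝ)) (by norm_num)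
      (by norm_num)).const_mul (ε * r)
    simp only [mul_zero] at h1
    refine h1.congr fun j => ?_
    rw [one_div, inv_pow]; ring
  refine ge_of_tendsto' hlim fun j => (main j).1 y (mem_ball_self (by positivity))

lemma measurable_grad {n : ℕ} (u : ES n → ℝ) : Measurable (gradient u) := by
  have : gradient u = fun x => (InnerProductSpace.toDual ℝ (ES n)).symm (fderiv ℝ u x) := rfl
  rw [this]
  exact (InnerProductSpace.toDual ℝ (ES n)).symm.continuous.measurable.comp
    (measurable_fderiv ℝ u)

lemma grad_bound {n : ℕ} {u : ES n → ℝ} {L : ℝ≥0} {c : ES n} {r : ℝ}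
    (hL : LipschitzOnWith L u (ball c r)) {x : ES n} (hx : x ∈ ball c r) :
    ‖gradient u x‖ ≤ L := by
  rw [norm_grad]
  exact norm_fderiv_le_of_lipschitzOn ℝ (isOpen_ball.mem_nhds hx) hL

lemma integrableOn_bdd {n : ℕ} {f : ES n → ℝ} {c : ES n} {r C : ℝ} (hf : Measurable f)
    (hb : ∀ x ∈ ball c r, |f x| ≤ C) : IntegrableOn f (ball c r) := by
  refine Measure.integrableOn_of_bounded (M := C) measure_ball_lt_top.ne
    hf.aestronglyMeasurable ?_
  rw [ae_restrict_iff' measurableSet_ball]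
  exact Eventually.of_forall fun x hx => by simpa using hb x hx

lemma JE_eq {n : ℕ} {f : ES n → ℝ} {g : ES n → ES n} {c : ES n} {r C : ℝ}
    (hpos : ∀ x ∈ ball c r, 0 < f x) (hg : ∀ᵐ x, x ∈ ball c r → gradient f x = g x)
    (hgm : Measurable g) (hb : ∀ x ∈ ball c r, ‖g x‖ ≤ C) :
    IntegrableOn (fun x => ‖g x‖ ^ 2 + 1) (ball c r) ∧
    JE (ball c r) f = ENNReal.ofReal (∫ x in ball c r, (‖g x‖ ^ 2 + 1)) := by
  have hint : IntegrableOn (fun x => ‖g x‖ ^ 2 + 1) (ball c r) := by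
    refine integrableOn_bdd (C := C ^ 2 + 1) (by fun_prop) fun x hx => ?_
    rw [abs_of_nonneg (by positivity)]
    gcongr
    exact hb x hx
  refine ⟨hint, ?_⟩
  rw [ofReal_integral_eq_lintegral_ofReal hint (Eventually.of_forall fun x => by positivity)]
  unfold JE
  apply lintegral_congr_ae
  rw [EventuallyEq, ae_restrict_iff' measurableSet_ball]
  filter_upwards [hg] with x hx hxb
  rw [hx hxb, if_pos (hpos x hxb), ENNReal.ofReal_add (by positivity) (by positivity),
    ENNReal.ofReal_pow (by positivity), ofReal_norm, enorm_eq_nnnorm]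
  simp

lemma euler_lagrange {n : ℕ} {Ω : Set (ES n)} {u : ES n → ℝ} (hu : IsMinimizer Ω u) {L : ℝ≥0}
    {z : ES n} {ρ c : ℝ} (hc : 0 < c) (hΩ : ball z ρ ⊆ Ω)
    (hL : LipschitzOnWith L u (ball z ρ)) (hpos : ∀ x ∈ ball z ρ, c ≤ u x)
    {φ : ES n → ℝ} (hφ : ContDiff ℝ 1 φ) (hφc : HasCompactSupport φ)
    (hφs : Function.support φ ⊆ ball z ρ) :
    ∫ x in ball z ρ, inner ℝ (gradient u x) (gradient φ x) = 0 := by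
  obtain ⟨hu0, huL, hm⟩ := hu
  obtain ⟨B, hB⟩ := hφ.continuous.bounded_above_of_compact_support hφc
  obtain ⟨C, hC⟩ := (hφ.continuous_fderiv one_ne_zero).bounded_above_of_compact_support
    (hφc.fderiv ℝ)
  have hB0 : 0 ≤ B := (norm_nonneg _).trans (hB z)
  have hC0 : 0 ≤ C := (norm_nonneg _).trans (hC z)
  have hCg : ∀ x, ‖gradient φ x‖ ≤ C := fun x => by rw [norm_grad]; exact hC x
  have hgu := measurable_grad u
  have hgφ := measurable_grad φ
  set b := ∫ x in ball z ρ, inner ℝ (gradient u x) (gradient φ x) with hb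
  set d := ∫ x in ball z ρ, ‖gradient φ x‖ ^ 2 with hd
  have hd0 : 0 ≤ d := integral_nonneg fun x => by positivity
  have hquad : ∀ s : ℝ, |s| * B < c → 0 ≤ 2 * s * b + s ^ 2 * d := by
    intro s hs
    set ut : ES n → ℝ := fun x => u x + s * φ x with hut
    have hne : {x | ut x ≠ u x} ⊆ ball z ρ := by
      intro x hx
      apply hφs
      intro h0
      apply hx
      simp [hut, h0]
    have hsφ : ∀ x, |s * φ x| < c := fun x => by
      rw [abs_mul]
      exact lt_of_le_of_lt (mul_le_mul_of_nonneg_left (hB x) (abs_nonneg s)) hs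
    have hutpos : ∀ x ∈ ball z ρ, 0 < ut x := fun x hx => by
      have := (abs_lt.1 (hsφ x)).1
      have := hpos x hx
      simp only [hut]; linarith
    have hut0 : ∀ x, 0 ≤ ut x := fun x => by
      by_cases hx : x ∈ ball z ρ
      · exact (hutpos x hx).le
      · have : ut x = u x := by
          by_contra h
          exact hx (hne h)
        rw [this]; exact hu0 x
    have hutL : LocallyLipschitz ut :=
      huL.add (contDiff_const.mul hφ).locallyLipschitz
    have key := hm ut hut0 hutL (isBounded_ball.subset hne) (hne.trans hΩ) z ρ hne
    rw [inter_eq_right.2 hΩ] at key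
    obtain ⟨i1, e1⟩ := JE_eq (fun x hx => hc.trans_le (hpos x hx))
      (Eventually.of_forall fun x _ => rfl) hgu (fun x hx => grad_bound hL hx)
    have hg1 : ∀ᵐ x, x ∈ ball z ρ → gradient ut x = gradient u x + s • gradient φ x := by
      filter_upwards [locLip_ae_diff huL] with x hx _
      have h2 : DifferentiableAt ℝ φ x := hφ.differentiable one_ne_zero x
      have h3 : fderiv ℝ ut x = fderiv ℝ u x + s • fderiv ℝ φ x := by
        simp only [hut]
        rw [fderiv_fun_add hx (h2.const_mul s), fderiv_const_mul h2]
      unfold gradient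
      rw [h3]; simp
    have hg2 : ∀ x ∈ ball z ρ, ‖gradient u x + s • gradient φ x‖ ≤ L + |s| * C := by
      intro x hx
      refine (norm_add_le _ _).trans ?_
      rw [norm_smul, Real.norm_eq_abs]
      gcongr
      · exact grad_bound hL hx
      · exact hCg x
    obtain ⟨i2, e2⟩ := JE_eq (f := ut) (g := fun x => gradient u x + s • gradient φ x)
      (c := z) (r := ρ) (C := L + |s| * C) hutpos hg1 (by fun_prop) hg2
    · rw [e1, e2, ENNReal.ofReal_le_ofReal_iff (integral_nonneg fun x => by positivity),
        ← sub_nonneg, ← integral_sub i2 i1] at key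
      have i3 : IntegrableOn (fun x => inner ℝ (gradient u x) (gradient φ x)) (ball z ρ) := by
        refine integrableOn_bdd (C := L * C) (by fun_prop) fun x hx => ?_
        refine (abs_real_inner_le_norm _ _).trans ?_
        gcongr
        · exact grad_bound hL hx
        · exact hCg x
      have i4 : IntegrableOn (fun x => ‖gradient φ x‖ ^ 2) (ball z ρ) := by
        refine integrableOn_bdd (C := C ^ 2) (by fun_prop) fun x hx => ?_
        rw [abs_of_nonneg (by positivity)]
        gcongr
        exact hCg x
      have e3 : ∫ x in ball z ρ, (‖gradient u x + s • gradient φ x‖ ^ 2 + 1 -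
          (‖gradient u x‖ ^ 2 + 1)) = 2 * s * b + s ^ 2 * d := by
        rw [hb, hd, ← integral_const_mul, ← integral_const_mul,
          ← integral_add (i3.const_mul _) (i4.const_mul _)]
        congr 1
        ext x
        rw [norm_add_sq_real, inner_smul_right, norm_smul, mul_pow, Real.norm_eq_abs, sq_abs]
        ring
      rwa [e3] at key
  by_contra hb0
  have hbp : 0 < |b| := abs_pos.2 hb0
  set t := min (c / (B + 1)) (|b| / (d + 1)) with ht
  have ht0 : 0 < t := by positivity
  have ht1 : t * B < c := by
    have : t * (B + 1) ≤ c := by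
      rw [← le_div_iff₀ (by positivity)]; exact min_le_left _ _
    linarith
  have ht2 : t * (d + 1) ≤ |b| := by
    rw [← le_div_iff₀ (by positivity)]; exact min_le_right _ _
  have q1 := hquad t (by rwa [abs_of_pos ht0])
  have q2 := hquad (-t) (by rwa [abs_neg, abs_of_pos ht0])
  have q3 : 2 * |b| ≤ t * d := by
    rcases abs_cases b with ⟨h, _⟩ | ⟨h, _⟩ <;> rw [h] <;> nlinarith
  nlinarith

lemma hasDerivAt_maxpow (k : ℕ) (s : ℝ) :
    HasDerivAt (fun s : ℝ => max s 0 ^ (k + 2)) ((k + 2) * max s 0 ^ (k + 1)) s := by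
  rcases lt_trichotomy s 0 with h | h | h
  · have : (fun s : ℝ => max s 0 ^ (k + 2)) =ᶠ[nhds s] fun _ => 0 := by
      filter_upwards [gt_mem_nhds h] with a ha
      rw [max_eq_right ha.le]; simp
    rw [max_eq_right h.le]
    simpa using (hasDerivAt_const s (0 : ℝ)).congr_of_eventuallyEq this
  · subst h
    have h1 : (fun s : ℝ => max s 0 ^ (k + 2)) =O[nhds 0] fun s : ℝ => ‖s - 0‖ ^ (k + 2) := by
      refine Asymptotics.IsBigO.of_bound 1 (Eventually.of_forall fun a => ?_)
      simp only [sub_zero, norm_pow, norm_norm, one_mul]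
      gcongr
      rw [Real.norm_eq_abs, Real.norm_eq_abs, abs_of_nonneg (le_max_right _ _)]
      exact max_le (le_abs_self a) (abs_nonneg a)
    have h2 := (h1.hasFDerivAt (𝕜 := ℝ) (by omega)).hasDerivAt
    simpa using h2
  · have : (fun s : ℝ => max s 0 ^ (k + 2)) =ᶠ[nhds s] fun s => s ^ (k + 2) := by
      filter_upwards [lt_mem_nhds h] with a ha
      rw [max_eq_left ha.le]
    rw [max_eq_left h.le]
    have h2 := (hasDerivAt_pow (k + 2) s).congr_of_eventuallyEq this
    simpa using h2

lemma contDiff_maxpow (k : ℕ) : ContDiff ℝ 1 (fun s : ℝ => max s 0 ^ (k + 2)) := by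
  rw [contDiff_one_iff_deriv]
  refine ⟨fun s => (hasDerivAt_maxpow k s).differentiableAt, ?_⟩
  have : deriv (fun s : ℝ => max s 0 ^ (k + 2)) = fun s : ℝ => ((k : ℝ) + 2) * max s 0 ^ (k + 1) :=
    funext fun s => (hasDerivAt_maxpow k s).deriv
  rw [this]
  fun_prop

/-- The radial averaging kernel. -/
noncomputable def ker0 {n : ℕ} (y : ES n) : ℝ := max (1 - ‖y‖ ^ 2) 0 ^ 2

/-- A radial potential: `∇ pot0 y = ker0 y • y`. -/
noncomputable def pot0 {n : ℕ} (y : ES n) : ℝ := -(1 / 6) * max (1 - ‖y‖ ^ 2) 0 ^ 3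

lemma ker0_contDiff {n : ℕ} : ContDiff ℝ 1 (ker0 : ES n → ℝ) :=
  (contDiff_maxpow 0).comp (contDiff_const.sub (contDiff_norm_sq ℝ))

lemma pot0_contDiff {n : ℕ} : ContDiff ℝ 1 (pot0 : ES n → ℝ) :=
  contDiff_const.mul ((contDiff_maxpow 1).comp (contDiff_const.sub (contDiff_norm_sq ℝ)))

lemma max0_of_norm {n : ℕ} {y : ES n} (hy : 1 ≤ ‖y‖) : max (1 - ‖y‖ ^ 2) 0 = 0 := by
  rw [max_eq_right]; nlinarith

lemma ker0_zero {n : ℕ} {y : ES n} (hy : 1 ≤ ‖y‖) : ker0 y = 0 := by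
  unfold ker0; rw [max0_of_norm hy]; simp

lemma pot0_zero {n : ℕ} {y : ES n} (hy : 1 ≤ ‖y‖) : pot0 y = 0 := by
  unfold pot0; rw [max0_of_norm hy]; simp

lemma ker0_nonneg {n : ℕ} (y : ES n) : 0 ≤ ker0 y := by unfold ker0; positivity

lemma ker0_neg {n : ℕ} (y : ES n) : ker0 (-y) = ker0 y := by unfold ker0; simp

lemma ker0_compact {n : ℕ} : HasCompactSupport (ker0 : ES n → ℝ) := by
  refine HasCompactSupport.intro (isCompact_closedBall 0 1) fun y hy => ker0_zero ?_
  simp only [mem_closedBall, dist_zero_right, not_le] at hy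
  exact hy.le

lemma ker0_int {n : ℕ} : 0 < ∫ y : ES n, ker0 y := by
  refine ker0_contDiff.continuous.integral_pos_of_hasCompactSupport_nonneg_nonzero
    ker0_compact ker0_nonneg (x := 0) ?_
  simp [ker0]

lemma pot0_fderiv {n : ℕ} (y : ES n) :
    HasFDerivAt (pot0 : ES n → ℝ) (ker0 y • innerSL ℝ y) y := by
  have h1 : HasFDerivAt (fun y : ES n => 1 - ‖y‖ ^ 2) (-(2 • innerSL ℝ y)) y :=
    (hasStrictFDerivAt_norm_sq y).hasFDerivAt.const_sub 1
  have h2 := ((hasDerivAt_maxpow 1 (1 - ‖y‖ ^ 2)).comp_hasFDerivAt y h1).const_mul (-(1 / 6))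
  refine h2.congr_fderiv ?_
  ext h
  simp [ker0]
  ring

lemma pot_scaled_grad {n : ℕ} (z w : ES n) {t : ℝ} (ht : 0 < t) :
    gradient (fun w : ES n => t ^ 2 * pot0 (t⁻¹ • (w - z))) w =
      ker0 (t⁻¹ • (w - z)) • (w - z) := by
  apply HasGradientAt.gradient
  rw [hasGradientAt_iff_hasFDerivAt]
  have h1 : HasFDerivAt (fun w : ES n => t⁻¹ • (w - z))
      (t⁻¹ • ContinuousLinearMap.id ℝ (ES n)) w :=
    ((hasFDerivAt_id w).sub_const z).const_smul t⁻¹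
  have h2 := ((pot0_fderiv (t⁻¹ • (w - z))).comp w h1).const_mul (t ^ 2)
  refine h2.congr_fderiv ?_
  ext h
  simp
  field_simp

lemma weak_radial {n : ℕ} {Ω : Set (ES n)} {u : ES n → ℝ} (hu : IsMinimizer Ω u) {L : ℝ≥0}
    {z : ES n} {ρ c t : ℝ} (hc : 0 < c) (hΩ : ball z ρ ⊆ Ω)
    (hL : LipschitzOnWith L u (ball z ρ)) (hpos : ∀ x ∈ ball z ρ, c ≤ u x)
    (ht : 0 < t) (htρ : t < ρ) :
    ∫ y, inner ℝ (gradient u (z + t • y)) y * ker0 y = 0 := by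
  have hz : ∀ w : ES n, t ≤ ‖w - z‖ → 1 ≤ ‖t⁻¹ • (w - z)‖ := fun w hw => by
    rw [norm_smul, norm_inv, Real.norm_eq_abs, abs_of_pos ht, inv_mul_eq_div,
      one_le_div₀ ht]
    exact hw
  have hEL := euler_lagrange hu hc hΩ hL hpos
    (φ := fun w : ES n => t ^ 2 * pot0 (t⁻¹ • (w - z)))
    (contDiff_const.mul (pot0_contDiff.comp
      (by fun_prop : ContDiff ℝ 1 fun w : ES n => t⁻¹ • (w - z)))) ?_ ?_
  · simp_rw [pot_scaled_grad z _ ht] at hEL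
    rw [setIntegral_eq_integral_of_forall_compl_eq_zero] at hEL
    · have e1 : ∫ y, inner ℝ (gradient u (z + t • y)) y * ker0 y =
          t⁻¹ * ∫ y, (fun w => inner ℝ (gradient u (z + w)) (ker0 (t⁻¹ • w) • w)) (t • y) := by
        rw [← integral_const_mul]
        congr 1
        ext y
        simp only [inner_smul_right, smul_smul, inv_mul_cancel₀ ht.ne', one_smul]
        field_simp
      rw [e1, Measure.integral_comp_smul volume
        (fun w => inner ℝ (gradient u (z + w)) (ker0 (t⁻¹ • w) • w)) t]
      have e2 := integral_add_left_eq_self (μ := volume)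
        (fun x => inner ℝ (gradient u x) (ker0 (t⁻¹ • (x - z)) • (x - z))) z
      simp only [add_sub_cancel_left] at e2
      rw [e2, hEL]; simp
    · intro w hw
      rw [ker0_zero, zero_smul, inner_zero_right]
      apply hz
      simp only [mem_ball, not_lt, dist_eq_norm] at hw
      linarith
  · refine HasCompactSupport.intro (isCompact_closedBall z t) fun w hw => ?_
    rw [pot0_zero, mul_zero]
    apply hz
    simp only [mem_closedBall, not_le, dist_eq_norm] at hw
    exact hw.le
  · intro w hw
    by_contra h
    apply hw
    simp only [mem_ball, not_lt, dist_eq_norm] at h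
    show t ^ 2 * pot0 (t⁻¹ • (w - z)) = 0
    rw [pot0_zero, mul_zero]
    apply hz
    linarith

lemma mean_const {n : ℕ} {Ω : Set (ES n)} {u : ES n → ℝ} (hu : IsMinimizer Ω u) {L : ℝ≥0}
    {z : ES n} {ρ c t : ℝ} (hc : 0 < c) (hΩ : ball z ρ ⊆ Ω)
    (hL : LipschitzOnWith L u (ball z ρ)) (hpos : ∀ x ∈ ball z ρ, c ≤ u x)
    (ht : 0 < t) (htρ : t < ρ) :
    ∫ y, u (z + t • y) * ker0 y = u z * ∫ y : ES n, ker0 y := by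
  have hucont : Continuous u := hu.2.1.continuous
  have hk : Continuous (ker0 : ES n → ℝ) := ker0_contDiff.continuous
  set F : ℝ → ℝ := fun s => ∫ y, u (z + s • y) * ker0 y with hF
  have hFcont : Continuous F := by
    have h1 : F = fun s => ∫ y in closedBall (0 : ES n) 1, u (z + s • y) * ker0 y := by
      ext s
      simp only [hF]
      rw [setIntegral_eq_integral_of_forall_compl_eq_zero]
      intro y hy
      simp only [mem_closedBall, dist_zero_right, not_le] at hy
      rw [ker0_zero hy.le, mul_zero]
    rw [h1]
    apply continuous_parametric_integral_of_continuous _ (isCompact_closedBall 0 1)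
    simp only [Function.uncurry_def]
    fun_prop
  have hder : ∀ s ∈ Ioo 0 ρ, HasDerivAt F 0 s := by
    intro s hs
    have key := hasDerivAt_integral_of_dominated_loc_of_lip (μ := (volume : Measure (ES n)))
      (F := fun s y => u (z + s • y) * ker0 y)
      (F' := fun y => inner ℝ (gradient u (z + s • y)) y * ker0 y) (x₀ := s) (s := Ioo 0 ρ)
      (bound := fun y => L * ker0 y)
      (isOpen_Ioo.mem_nhds hs) ?_ ?_ ?_ ?_ ?_ ?_
    · have := key.2
      rwa [weak_radial hu hc hΩ hL hpos hs.1 hs.2] at this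
    · refine Eventually.of_forall fun a => Continuous.aestronglyMeasurable ?_
      fun_prop
    · refine Continuous.integrable_of_hasCompactSupport (by fun_prop) ?_
      exact ker0_compact.mul_left
    · apply Measurable.aestronglyMeasurable
      have h1 : Measurable fun y : ES n => gradient u (z + s • y) :=
        (measurable_grad u).comp (by fun_prop)
      have h2 : Measurable (ker0 : ES n → ℝ) := hk.measurable
      fun_prop
    · refine Eventually.of_forall fun y => ?_
      by_cases hy : 1 ≤ ‖y‖
      · simp only [ker0_zero hy, mul_zero]
        exact (LipschitzWith.const' (0 : ℝ)).lipschitzOnWith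
      · push Not at hy
        have hin : ∀ a ∈ Ioo 0 ρ, z + a • y ∈ ball z ρ := fun a ha => by
          rw [mem_ball, dist_eq_norm, add_sub_cancel_left, norm_smul, Real.norm_eq_abs,
            abs_of_pos ha.1]
          nlinarith [ha.1, ha.2, norm_nonneg y]
        refine LipschitzOnWith.of_dist_le_mul fun a ha b hb => ?_
        have h1 := hL.dist_le_mul _ (hin a ha) _ (hin b hb)
        rw [dist_add_left, dist_eq_norm (a • y), ← sub_smul, norm_smul,
          ← dist_eq_norm a b] at h1
        have h0 := ker0_nonneg y
        rw [Real.coe_nnabs, abs_of_nonneg (mul_nonneg L.coe_nonneg h0), Real.dist_eq, ← sub_mul, abs_mul,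
          abs_of_nonneg h0, ← Real.dist_eq]
        calc _ ≤ L * (dist a b * ‖y‖) * ker0 y := by gcongr
          _ ≤ L * (dist a b * 1) * ker0 y := by gcongr
          _ = _ := by ring
    · exact (hk.integrable_of_hasCompactSupport ker0_compact).const_mul _
    · have hq : Measure.QuasiMeasurePreserving (fun y : ES n => z + s • y) volume volume :=
        (measurePreserving_add_left volume z).quasiMeasurePreserving.comp
          (Measure.quasiMeasurePreserving_smul volume hs.1.ne')
      filter_upwards [hq.ae (locLip_ae_diff hu.2.1)] with y hy
      apply HasDerivAt.mul_const
      have h1 : HasDerivAt (fun a : ℝ => z + a • y) y s := by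
        simpa using ((hasDerivAt_id s).smul_const y).const_add z
      have h2 := hy.hasFDerivAt.comp_hasDerivAt s h1
      refine h2.congr_deriv ?_
      rw [← toDual_gradient]; simp
  have hconst := constant_of_has_deriv_right_zero (f := fun s => F (t - s)) (a := 0) (b := t)
    (by fun_prop) (fun s hs => by
      have h1 : HasDerivAt (fun s => t - s) (-1) s := by
        simpa using (hasDerivAt_id s).const_sub t
      have h2 := (hder (t - s) ⟨by linarith [hs.2], by linarith [hs.1]⟩).comp s h1
      have h3 : HasDerivAt (fun s => F (t - s)) 0 s := h2.congr_deriv (by simp)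
      exact h3.hasDerivWithinAt)
  have h3 := hconst t ⟨ht.le, le_rfl⟩
  simp only [sub_self, sub_zero] at h3
  show F t = _
  rw [← h3]
  simp [hF, integral_const_mul]

/-- The rescaled kernel. -/
noncomputable def kert {n : ℕ} (t : ℝ) (w : ES n) : ℝ := ker0 (t⁻¹ • w)

lemma kert_contDiff {n : ℕ} (t : ℝ) : ContDiff ℝ 1 (kert t : ES n → ℝ) :=
  ker0_contDiff.comp (by fun_prop : ContDiff ℝ 1 fun w : ES n => t⁻¹ • w)

lemma kert_compact {n : ℕ} {t : ℝ} (ht : 0 < t) : HasCompactSupport (kert t : ES n → ℝ) :=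
  ker0_compact.comp_smul (inv_ne_zero ht.ne')

lemma mean_value {n : ℕ} {Ω : Set (ES n)} {u : ES n → ℝ} (hu : IsMinimizer Ω u) {L : ℝ≥0}
    {z : ES n} {ρ c t : ℝ} (hc : 0 < c) (hΩ : ball z ρ ⊆ Ω)
    (hL : LipschitzOnWith L u (ball z ρ)) (hpos : ∀ x ∈ ball z ρ, c ≤ u x)
    (ht : 0 < t) (htρ : t < ρ) :
    ∫ w, u w * kert t (z - w) = (t ^ n * ∫ y : ES n, ker0 y) * u z := by
  have h1 := mean_const hu hc hΩ hL hpos ht htρ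
  have e1 : ∫ y, u (z + t • y) * ker0 y =
      ∫ y, (fun w => u (z + w) * kert t w) (t • y) := by
    congr 1; ext y
    simp only [kert, smul_smul, inv_mul_cancel₀ ht.ne', one_smul]
  rw [e1, Measure.integral_comp_smul volume (fun w => u (z + w) * kert t w) t] at h1
  have e2 := integral_add_left_eq_self (μ := volume)
    (fun w => u w * kert t (z - w)) z
  have e3 : ∀ w : ES n, kert t (z - (z + w)) = kert t w := fun w => by
    unfold kert
    rw [sub_add_cancel_left, smul_neg, ker0_neg]
  simp only [e3] at e2
  rw [e2] at h1
  have hp : 0 < t ^ n := by positivity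
  simp only [finrank_euclideanSpace, Fintype.card_fin, smul_eq_mul, abs_inv, abs_of_pos hp] at h1
  rw [inv_mul_eq_iff_eq_mul₀ hp.ne'] at h1
  rw [h1]; ring

lemma lim_int {n : ℕ} {G : Type*} [NormedAddCommGroup G] [NormedSpace ℝ G]
    {u : ℕ → ES n → ℝ} (hcont : ∀ k, Continuous (u k))
    (hlip : ∀ K : Set (ES n), IsCompact K → ∃ L : ℝ≥0, ∀ k, LipschitzOnWith L (u k) K)
    {v : ES n → ℝ} (hconv : ∀ x, Tendsto (fun k => u k x) atTop (nhds (v x)))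
    {h : ES n → G} (hh : Continuous h) (hc : HasCompactSupport h) :
    Tendsto (fun k => ∫ w, u k w • h w) atTop (nhds (∫ w, v w • h w)) := by
  obtain ⟨R, hR⟩ := hc.isCompact.isBounded.subset_closedBall (0 : ES n)
  have hRn : tsupport h ⊆ closedBall 0 |R| :=
    hR.trans (closedBall_subset_closedBall (le_abs_self R))
  obtain ⟨L, hL⟩ := hlip (closedBall 0 |R|) (isCompact_closedBall _ _)
  obtain ⟨B, hB⟩ := (hconv 0).norm.bddAbove_range
  have hB' : ∀ k, |u k 0| ≤ B := fun k => hB ⟨k, rfl⟩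
  refine tendsto_integral_of_dominated_convergence (fun w => (B + L * |R|) * ‖h w‖) ?_ ?_ ?_ ?_
  · intro k
    exact ((hcont k).smul hh).aestronglyMeasurable
  · exact (hh.norm.integrable_of_hasCompactSupport hc.norm).const_mul _
  · intro k
    refine Eventually.of_forall fun w => ?_
    rw [norm_smul]
    by_cases hw : w ∈ tsupport h
    · have hw' := hRn hw
      have h1 := (hL k).dist_le_mul w hw' 0 (mem_closedBall_self (abs_nonneg R))
      have h2 : dist w 0 ≤ |R| := hw'
      gcongr
      have h3 : ‖u k w‖ ≤ ‖u k w - u k 0‖ + ‖u k 0‖ := by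
        simpa using norm_add_le (u k w - u k 0) (u k 0)
      rw [← dist_eq_norm] at h3
      have h4 : (L : ℝ) * dist w 0 ≤ L * |R| := by gcongr
      have h5 := hB' k
      rw [← Real.norm_eq_abs] at h5
      linarith
    · rw [image_eq_zero_of_notMem_tsupport hw]; simp
  · exact Eventually.of_forall fun w => (hconv w).smul_const _

lemma grad_formula {n : ℕ} {U : ES n → ℝ} (hU : Continuous U) {t κ : ℝ} (ht : 0 < t)
    (hκ : 0 < κ) {x : ES n}
    (hmv : ∀ᶠ z in nhds x, ∫ w, U w * kert t (z - w) = κ * U z) :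
    fderiv ℝ U x = κ⁻¹ • ∫ w, U w • fderiv ℝ (kert t) (x - w) := by
  have h1 := (kert_compact (n := n) ht).hasFDerivAt_convolution_right
    (ContinuousLinearMap.lsmul ℝ ℝ) (μ := volume) hU.locallyIntegrable (kert_contDiff t) x
  have h2 : U =ᶠ[nhds x] fun z => κ⁻¹ *
      (MeasureTheory.convolution U (kert t) (ContinuousLinearMap.lsmul ℝ ℝ) volume) z := by
    filter_upwards [hmv] with z hz
    have : MeasureTheory.convolution U (kert t) (ContinuousLinearMap.lsmul ℝ ℝ) volume z =
      ∫ w, U w * kert t (z - w) := rfl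
    rw [this, hz, inv_mul_cancel_left₀ hκ.ne']
  rw [h2.fderiv_eq, (h1.const_mul κ⁻¹).fderiv]
  rfl

lemma lim_lip {n : ℕ} {u : ℕ → ES n → ℝ} {K : Set (ES n)} {L : ℝ≥0}
    (hL : ∀ k, LipschitzOnWith L (u k) K)
    {v : ES n → ℝ} (hconv : ∀ x, Tendsto (fun k => u k x) atTop (nhds (v x))) :
    LipschitzOnWith L v K := by
  refine LipschitzOnWith.of_dist_le_mul fun a ha b hb => ?_
  exact le_of_tendsto' ((hconv a).dist (hconv b)) fun k => (hL k).dist_le_mul a ha b hb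

lemma pos_case {n : ℕ} {Ω : Set (ES n)} (hΩ : IsOpen Ω) {u : ℕ → ES n → ℝ}
    (hmin : ∀ k, IsMinimizer Ω (u k))
    (hlip : ∀ K : Set (ES n), IsCompact K → ∃ L : ℝ≥0, ∀ k, LipschitzOnWith L (u k) K)
    {v : ES n → ℝ} (hconv : ∀ x, Tendsto (fun k => u k x) atTop (nhds (v x)))
    (hv : Continuous v) {x : ES n} (hx : x ∈ Ω) (hvx : 0 < v x) :
    Tendsto (fun k => gradient (u k) x) atTop (nhds (gradient v x)) := by
  have hcont : ∀ k, Continuous (u k) := fun k => (hmin k).2.1.continuous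
  obtain ⟨L, hL⟩ := hlip (closedBall x 1) (isCompact_closedBall _ _)
  obtain ⟨ρ0, hρ0, hρΩ⟩ := Metric.isOpen_iff.1 hΩ x hx
  set ρ := min (min (ρ0 / 2) (1 / 2)) (v x / (8 * (L + 1))) with hρ
  have hρpos : 0 < ρ := by positivity
  have hρ1 : ρ ≤ ρ0 / 2 := (min_le_left _ _).trans (min_le_left _ _)
  have hρ2 : ρ ≤ 1 / 2 := (min_le_left _ _).trans (min_le_right _ _)
  have hρ3 : ρ * (8 * (L + 1)) ≤ v x := by
    rw [← le_div_iff₀ (by positivity)]; exact min_le_right _ _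
  have hb1 : ball x (2 * ρ) ⊆ closedBall x 1 :=
    (ball_subset_ball (by linarith)).trans ball_subset_closedBall
  have hev : ∀ᶠ k in atTop, ∀ z ∈ ball x (2 * ρ), v x / 2 ≤ u k z := by
    filter_upwards [(hconv x).eventually (lt_mem_nhds (by linarith : 3 / 4 * v x < v x))]
      with k hk z hz
    have h1 := (hL k).dist_le_mul z (hb1 hz) x (mem_closedBall_self zero_le_one)
    rw [Real.dist_eq] at h1
    have h2 := (abs_le.1 h1).1
    have h3 : (L : ℝ) * dist z x ≤ L * (2 * ρ) := by
      gcongr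
      exact (mem_ball.1 hz).le
    nlinarith
  set t := ρ / 2 with ht
  have ht0 : 0 < t := by positivity
  set κ := t ^ n * ∫ y : ES n, ker0 y with hκ
  have hκ0 : 0 < κ := mul_pos (by positivity) ker0_int
  have hmvk : ∀ᶠ k in atTop, ∀ z ∈ ball x ρ, ∫ w, u k w * kert t (z - w) = κ * u k z := by
    filter_upwards [hev] with k hk z hz
    have hsub : ball z ρ ⊆ ball x (2 * ρ) := ball_subset_ball' (by
      have := mem_ball.1 hz
      linarith)
    refine mean_value (hmin k) (c := v x / 2) (by positivity)
      (hsub.trans ((ball_subset_ball (by linarith)).trans hρΩ))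
      ((hL k).mono (hsub.trans hb1)) (fun a ha => hk a (hsub ha)) ht0 (by linarith)
  have hcs : ∀ {G : Type} [NormedAddCommGroup G] [NormedSpace ℝ G] (g : ES n → G) (z : ES n),
      HasCompactSupport g → HasCompactSupport fun w => g (z - w) := fun g z hg =>
    hg.comp_homeomorph (Homeomorph.subLeft z)
  have hmvv : ∀ z ∈ ball x ρ, ∫ w, v w * kert t (z - w) = κ * v z := by
    intro z hz
    have h1 := lim_int hcont hlip hconv (h := fun w => kert t (z - w))
      ((kert_contDiff t).continuous.comp (by fun_prop)) (hcs _ z (kert_compact ht0))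
    have h2 : Tendsto (fun k => κ * u k z) atTop (nhds (κ * v z)) := (hconv z).const_mul κ
    refine tendsto_nhds_unique (h1.congr' ?_) h2
    filter_upwards [hmvk] with k hk
    exact hk z hz
  have hnb : ball x ρ ∈ nhds x := ball_mem_nhds x hρpos
  have hlim := lim_int hcont hlip hconv (h := fun w => fderiv ℝ (kert t) (x - w))
      (((kert_contDiff t).continuous_fderiv one_ne_zero).comp (by fun_prop))
      (hcs _ x ((kert_compact ht0).fderiv ℝ))
  have hfd : Tendsto (fun k => fderiv ℝ (u k) x) atTop (nhds (fderiv ℝ v x)) := by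
    rw [grad_formula hv ht0 hκ0 (mem_of_superset hnb hmvv)]
    refine (hlim.const_smul κ⁻¹).congr' ?_
    filter_upwards [hmvk] with k hk
    rw [grad_formula (hcont k) ht0 hκ0 (mem_of_superset hnb hk)]
  exact ((InnerProductSpace.toDual ℝ (ES n)).symm.continuous.tendsto _).comp hfd

lemma unif_upper {n : ℕ} {u : ℕ → ES n → ℝ}
    {v : ES n → ℝ} (hconv : ∀ x, Tendsto (fun k => u k x) atTop (nhds (v x)))
    {K : Set (ES n)} (hK : IsCompact K) {L : ℝ≥0} (hL : ∀ k, LipschitzOnWith L (u k) K)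
    {e δ : ℝ} (hδ : 0 < δ) (hv : ∀ z ∈ K, v z ≤ e) :
    ∀ᶠ k in atTop, ∀ z ∈ K, u k z ≤ e + δ := by
  set s := δ / (2 * (L + 1)) with hs
  have hs0 : 0 < s := by positivity
  obtain ⟨T, hTK, hTf, hT⟩ := hK.finite_cover_balls hs0
  have h1 : ∀ᶠ k in atTop, ∀ a ∈ T, u k a < e + δ / 2 := by
    rw [eventually_all_finite hTf]
    intro a ha
    exact (hconv a).eventually (gt_mem_nhds (by linarith [hv a (hTK ha)]))
  filter_upwards [h1] with k hk z hz
  obtain ⟨a, ha, hza⟩ := mem_iUnion₂.1 (hT hz)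
  have h2 := (hL k).dist_le_mul z hz a (hTK ha)
  rw [Real.dist_eq] at h2
  have h3 := (abs_le.1 h2).2
  have h4 : (L : ℝ) * dist z a ≤ L * s := by
    gcongr
    exact (mem_ball.1 hza).le
  have h5 : s * (2 * (L + 1)) = δ := by rw [hs]; field_simp
  have h6 := hk a ha
  nlinarith

lemma zero_case {n : ℕ} {Ω : Set (ES n)} (hΩ : IsOpen Ω) {u : ℕ → ES n → ℝ}
    (hmin : ∀ k, IsMinimizer Ω (u k))
    (hlip : ∀ K : Set (ES n), IsCompact K → ∃ L : ℝ≥0, ∀ k, LipschitzOnWith L (u k) K)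
    {v : ES n → ℝ} (hconv : ∀ x, Tendsto (fun k => u k x) atTop (nhds (v x)))
    (hv0 : ∀ x, 0 ≤ v x) {x : ES n} (hx : x ∈ Ω) (hvx : v x = 0)
    (hd : DifferentiableAt ℝ v x) :
    gradient v x = 0 ∧ ∀ᶠ k in atTop, u k =ᶠ[nhds x] fun _ => 0 := by
  have hfd : fderiv ℝ v x = 0 := by
    apply IsLocalMin.fderiv_eq_zero
    filter_upwards with a
    rw [hvx]; exact hv0 a
  refine ⟨by unfold gradient; rw [hfd]; simp, ?_⟩
  obtain ⟨L0, hL0⟩ := hlip (closedBall x 1) (isCompact_closedBall _ _)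
  set L := L0 + 1 with hLdef
  have hL : ∀ k, LipschitzOnWith L (u k) (closedBall x 1) := fun k =>
    (hL0 k).weaken (by simp [hLdef])
  obtain ⟨ε, hε, hnd⟩ := nondeg (n := n) (L := L) (by positivity)
  obtain ⟨ρ0, hρ0, hρΩ⟩ := Metric.isOpen_iff.1 hΩ x hx
  have hlo := hd.hasFDerivAt.isLittleO
  rw [hfd] at hlo
  have hlo2 := hlo.def (by positivity : 0 < ε / 4)
  obtain ⟨ρ1, hρ1, hρv⟩ := Metric.eventually_nhds_iff.1 hlo2
  set r := min (min (ρ0 / 2) (1 / 2)) (ρ1 / 4) with hr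
  have hr0 : 0 < r := by positivity
  have hr1 : r ≤ ρ0 / 2 := (min_le_left _ _).trans (min_le_left _ _)
  have hr2 : r ≤ 1 / 2 := (min_le_left _ _).trans (min_le_right _ _)
  have hr3 : r ≤ ρ1 / 4 := min_le_right _ _
  have hvb : ∀ z ∈ closedBall x (2 * r), v z ≤ ε * r / 2 := by
    intro z hz
    have hz' : dist z x ≤ 2 * r := hz
    have h1 := hρv (y := z) (by linarith)
    simp only [hvx, sub_zero, _root_.zero_apply, ← dist_eq_norm z x] at h1
    have h2 := (le_abs_self _).trans h1
    nlinarith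
  have hu := unif_upper hconv (isCompact_closedBall x (2 * r)) (L := L)
    (fun k => (hL k).mono (closedBall_subset_closedBall (by linarith)))
    (by positivity : 0 < ε * r / 2) hvb
  filter_upwards [hu] with k hk
  filter_upwards [ball_mem_nhds x hr0] with y hy
  have hsub : ball y r ⊆ ball x (2 * r) := ball_subset_ball' (by
      have := mem_ball.1 hy
      linarith)
  refine hnd Ω (u k) (hmin k) y r hr0
    (hsub.trans ((ball_subset_ball (by linarith)).trans hρΩ))
    ((hL k).mono (hsub.trans ((ball_subset_ball (by linarith)).trans ball_subset_closedBall)))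
    fun z hz => ?_
  have := hk z (ball_subset_closedBall (hsub hz))
  linarith

/-- compactness of minimizers — convergence of the positivity indicators in
`L¹_loc` and a.e. convergence of the gradients. -/
theorem stmt8 {n : ℕ} (hn : 2 ≤ n) (Ω : Set (EuclideanSpace ℝ (Fin n))) (hΩ : IsOpen Ω)
    (u : ℕ → EuclideanSpace ℝ (Fin n) → ℝ)
    (hmin : ∀ k, IsMinimizer Ω (u k))
    (hlip : ∀ K : Set (EuclideanSpace ℝ (Fin n)), IsCompact K →
      ∃ L : ℝ≥0, ∀ k, LipschitzOnWith L (u k) K)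
    (v : EuclideanSpace ℝ (Fin n) → ℝ)
    (hconv : ∀ x, Tendsto (fun k => u k x) atTop (nhds (v x))) :
    (∀ K : Set (EuclideanSpace ℝ (Fin n)), IsCompact K → K ⊆ Ω →
      Tendsto (fun k => ∫ x in K,
          |(if 0 < u k x then (1 : ℝ) else 0) - (if 0 < v x then (1 : ℝ) else 0)|)
        atTop (nhds 0)) ∧
    (∀ᵐ x ∂(volume.restrict Ω),
      Tendsto (fun k => gradient (u k) x) atTop (nhds (gradient v x))) := by

  have hvlip : LocallyLipschitz v := by
    intro x
    obtain ⟨L, hL⟩ := hlip (closedBall x 1) (isCompact_closedBall _ _)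
    exact ⟨L, closedBall x 1, closedBall_mem_nhds x one_pos, lim_lip hL hconv⟩
  have hv0 : ∀ x, 0 ≤ v x := fun x =>
    ge_of_tendsto' (hconv x) fun k => (hmin k).1 x
  have hvc := hvlip.continuous
  have hdiff : ∀ᵐ x, DifferentiableAt ℝ v x := locLip_ae_diff hvlip
  constructor
  · intro K hK hKΩ
    have h0 : (0 : ℝ) = ∫ x in K, (0 : ℝ) := by simp
    refine (tendsto_integral_of_dominated_convergence (f := fun _ => (0 : ℝ))
      (fun _ => (1 : ℝ)) ?_ ?_ ?_ ?_).trans (le_of_eq (congrArg nhds h0.symm))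
    · intro k
      have m1 : Measurable fun x => if 0 < u k x then (1 : ℝ) else 0 :=
        Measurable.ite (isOpen_lt continuous_const (hmin k).2.1.continuous).measurableSet
          measurable_const measurable_const
      have m2 : Measurable fun x => if 0 < v x then (1 : ℝ) else 0 :=
        Measurable.ite (isOpen_lt continuous_const hvc).measurableSet
          measurable_const measurable_const
      exact (continuous_abs.measurable.comp (m1.sub m2)).aestronglyMeasurable
    · exact integrableOn_const hK.measure_lt_top.ne
    · intro k
      refine Eventually.of_forall fun x => ?_
      split_ifs <;> simp
    · rw [ae_restrict_iff' hK.measurableSet]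
      filter_upwards [hdiff] with x hdx hxK
      apply tendsto_const_nhds.congr'
      rcases (hv0 x).eq_or_lt with h | h
      · filter_upwards [(zero_case hΩ hmin hlip hconv hv0 (hKΩ hxK) h.symm hdx).2] with k hk
        rw [hk.eq_of_nhds, ← h]; simp
      · filter_upwards [(hconv x).eventually (lt_mem_nhds h)] with k hk
        rw [if_pos hk, if_pos h]; simp
  · rw [ae_restrict_iff' hΩ.measurableSet]
    filter_upwards [hdiff] with x hdx hxΩ
    rcases (hv0 x).eq_or_lt with h | h
    · obtain ⟨h1, h2⟩ := zero_case hΩ hmin hlip hconv hv0 hxΩ h.symm hdx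
      rw [h1]
      apply tendsto_const_nhds.congr'
      filter_upwards [h2] with k hk
      rw [grad_congr hk]
      unfold gradient; simp
    · exact pos_case hΩ hmin hlip hconv hvc hxΩ h
end

section
/- Compactness of minimizers (local Hausdorff convergence): let Ω ⊆ ℝⁿ be open and let (u_k) be a sequence of minimizers of J in Ω which is locally uniformly Lipschitz (for every compact K ⊆ ℝⁿ there is L such that every u_k is L-Lipschitz on K) and converges pointwise to a function u. Then {u_k > 0} → {u > 0} and F(u_k) → F(u) locally in the Hausdorff distance: for every compact K ⊆ Ω and every ε > 0 there is N such that for all k ≥ N, (a) every point of {u_k > 0} ∩ K is within distance ε of {u > 0} and every point of {u > 0} ∩ K is within distance ε of {u_k > 0}; (b) every point of F(u_k) ∩ K is within distance ε of F(u) and every point of F(u) ∩ K is within distance ε of F(u_k). Here F(w) := Ω ∩ ∂{w > 0} denotes the free boundary. -/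
open MeasureTheory Metric Set Filter ENNReal NNReal

namespace AC


lemma nnnorm_gradient {n : ℕ} (u : (EuclideanSpace ℝ (Fin n)) → ℝ) (x : EuclideanSpace ℝ (Fin n)) :
    ‖gradient u x‖₊ = ‖fderiv ℝ u x‖₊ := by
  rw [gradient, LinearIsometryEquiv.nnnorm_map]

lemma ae_diff_ball {n : ℕ} {f : (EuclideanSpace ℝ (Fin n)) → ℝ} (hf : LocallyLipschitz f) (x0 : EuclideanSpace ℝ (Fin n)) (r : ℝ) :
    ∀ᵐ x ∂(volume.restrict (ball x0 r)), DifferentiableAt ℝ f x := by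
  obtain ⟨C, hC⟩ := (hf.locallyLipschitzOn (s := closedBall x0 r)).exists_lipschitzOnWith_of_compact
    (isCompact_closedBall x0 r)
  have h := (hC.mono ball_subset_closedBall).ae_differentiableWithinAt_of_mem (μ := volume)
  rw [ae_restrict_iff' measurableSet_ball]
  filter_upwards [h] with x hx hxb
  exact (hx hxb).differentiableAt (isOpen_ball.mem_nhds hxb)

lemma JE_lt_top {n : ℕ} {u : (EuclideanSpace ℝ (Fin n)) → ℝ} {x0 : EuclideanSpace ℝ (Fin n)} {r : ℝ} {L : ℝ≥0}
    (hL : LipschitzOnWith L u (ball x0 r)) : JE (ball x0 r) u ≠ ∞ := by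
  have : JE (ball x0 r) u ≤ ∫⁻ x in ball x0 r, ((L : ℝ≥0∞) ^ 2 + 1) := by
    unfold JE
    apply setLIntegral_mono measurable_const
    intro x hx
    gcongr
    · rw [nnnorm_gradient]
      exact norm_fderiv_le_of_lipschitzOn ℝ (isOpen_ball.mem_nhds hx) hL
    · split_ifs <;> simp
  refine ne_top_of_le_ne_top ?_ this
  rw [setLIntegral_const]
  exact ENNReal.mul_ne_top (by simp) measure_ball_lt_top.ne

lemma step {n : ℕ} {Ω : Set (EuclideanSpace ℝ (Fin n))} {u : (EuclideanSpace ℝ (Fin n)) → ℝ} (hu : IsMinimizer Ω u) {x0 : EuclideanSpace ℝ (Fin n)}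
    {r s δ : ℝ} {L : ℝ≥0} (hb : ball x0 r ⊆ Ω) (hL : LipschitzOnWith L u (ball x0 r))
    (hδ : ∀ x ∈ ball x0 r, u x ≤ δ) (hδ0 : 0 < δ) (hsr : s < r) (q : ℝ≥0)
    (hq : (q : ℝ) = δ / (r - s)) :
    volume ({x | 0 < u x} ∩ ball x0 s) ≤
      ((2 * L * q + q ^ 2 : ℝ≥0) : ℝ≥0∞) * volume ({x | 0 < u x} ∩ ball x0 r) := by
  obtain ⟨hu0, hul, humin⟩ := hu
  have hrs : 0 < r - s := by linarith
  have huc : Continuous u := hul.continuous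
  have hq0 : (0 : ℝ) ≤ q := q.2
  set ζ : (EuclideanSpace ℝ (Fin n)) → ℝ := fun x => max 0 (min δ (q * (r - dist x x0))) with hζ
  have hζlip : LipschitzWith q ζ := by
    have h1 : LipschitzWith q (fun x : EuclideanSpace ℝ (Fin n) => (q : ℝ) * (r - dist x x0)) := by
      apply LipschitzWith.of_dist_le_mul
      intro x y
      rw [Real.dist_eq, ← mul_sub, abs_mul, abs_of_nonneg hq0]
      gcongr
      have := abs_dist_sub_le x y x0
      rw [abs_sub_comm] at this
      rw [show r - dist x x0 - (r - dist y x0) = dist y x0 - dist x x0 by ring]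
      exact this
    exact (h1.const_min δ).const_max 0
  have hζ0 : ∀ x, 0 ≤ ζ x := fun x => le_max_left _ _
  have hζs : ∀ x ∈ ball x0 s, ζ x = δ := by
    intro x hx
    have hx' : dist x x0 < s := hx
    have : δ ≤ q * (r - dist x x0) := by
      have : δ = q * (r - s) := by rw [hq]; field_simp
      rw [this]; gcongr
    simp only [hζ]
    rw [min_eq_left this, max_eq_right hδ0.le]
  have hζr : ∀ x, x ∉ ball x0 r → ζ x = 0 := by
    intro x hx
    have hx' : r ≤ dist x x0 := by simpa using hx
    have : q * (r - dist x x0) ≤ 0 := mul_nonpos_of_nonneg_of_nonpos hq0 (by linarith)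
    simp only [hζ]
    exact max_eq_left ((min_le_right _ _).trans this)
  set w : (EuclideanSpace ℝ (Fin n)) → ℝ := fun x => max (u x - ζ x) 0 with hw
  have hw0 : ∀ x, 0 ≤ w x := fun x => le_max_right _ _
  have hwl : LocallyLipschitz w := by
    have : LocallyLipschitz (fun x => u x - ζ x) := hul.sub hζlip.locallyLipschitz
    exact this.max_const 0
  have hne : {x | w x ≠ u x} ⊆ ball x0 r := by
    intro x hx
    by_contra hxb
    apply hx
    simp only [hw]
    rw [hζr x hxb, sub_zero, max_eq_left (hu0 x)]
  have hJ := humin w hw0 hwl (isBounded_ball.subset hne) (hne.trans hb) x0 r hne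
  rw [inter_eq_self_of_subset_right hb] at hJ
  have hfin := JE_lt_top hL
  have hpos : MeasurableSet {x | 0 < u x} := (isOpen_lt continuous_const huc).measurableSet
  set c : ℝ≥0 := 2 * L * q + q ^ 2 with hc
  have key : ∀ᵐ x ∂(volume.restrict (ball x0 r)),
      ((‖gradient w x‖₊ : ℝ≥0∞) ^ 2 + if 0 < w x then 1 else 0) +
        ({x | 0 < u x} ∩ ball x0 s).indicator 1 x ≤
      ((‖gradient u x‖₊ : ℝ≥0∞) ^ 2 + if 0 < u x then 1 else 0) +
        (c : ℝ≥0∞) * ({x | 0 < u x} ∩ ball x0 r).indicator 1 x := by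
    filter_upwards [ae_diff_ball hul x0 r, ae_diff_ball hwl x0 r,
      ae_restrict_mem measurableSet_ball] with x hxu hxw hxb
    rw [nnnorm_gradient, nnnorm_gradient]
    rcases (hw0 x).eq_or_lt with hwx | hwx
    · have hmin : IsLocalMin w x := Filter.Eventually.of_forall fun y => by
        rw [← hwx]; exact hw0 y
      rw [hmin.fderiv_eq_zero, ← hwx]
      by_cases hux : 0 < u x
      · have h1 : ({x | 0 < u x} ∩ ball x0 s).indicator (1 : (EuclideanSpace ℝ (Fin n)) → ℝ≥0∞) x ≤ 1 :=
          indicator_le_self' (by simp) x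
        simp only [hux, if_true, lt_irrefl, if_false, nnnorm_zero, ENNReal.coe_zero]
        calc _ ≤ (1 : ℝ≥0∞) := by simpa using h1
          _ ≤ _ := by
            refine le_trans ?_ le_self_add
            exact le_add_self
      · have h1 : ({x | 0 < u x} ∩ ball x0 s).indicator (1 : (EuclideanSpace ℝ (Fin n)) → ℝ≥0∞) x = 0 :=
          indicator_of_notMem (fun h => hux h.1) _
        rw [h1]; simp
    · have hux : ζ x < u x := by
        by_contra hcon
        simp only [hw] at hwx
        rw [max_eq_right (by linarith)] at hwx
        exact lt_irrefl _ hwx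
      have hxs : x ∉ ball x0 s := by
        intro h
        rw [hζs x h] at hux
        linarith [hδ x hxb]
      have hux0 : 0 < u x := lt_of_le_of_lt (hζ0 x) hux
      rw [indicator_of_notMem (fun h => hxs h.2), indicator_of_mem (show x ∈ {x | 0 < u x} ∩ ball x0 r from ⟨hux0, hxb⟩)]
      simp only [hux0, hwx, if_true, add_zero, Pi.one_apply, mul_one]
      have hloc : (fun y => w y - u y) =ᶠ[nhds x] fun y => - ζ y := by
        have : ∀ᶠ y in nhds x, ζ y < u y :=
          (isOpen_lt hζlip.continuous huc).mem_nhds hux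
        filter_upwards [this] with y hy
        simp only [hw]
        rw [max_eq_left (by linarith)]; ring
      have h2 : fderiv ℝ (fun y => w y - u y) x = fderiv ℝ w x - fderiv ℝ u x :=
        fderiv_fun_sub hxw hxu
      have h3 : ‖fderiv ℝ w x - fderiv ℝ u x‖ ≤ q := by
        rw [← h2, hloc.fderiv_eq]
        exact norm_fderiv_le_of_lipschitz ℝ hζlip.neg
      have h4 : ‖fderiv ℝ u x‖ ≤ L :=
        norm_fderiv_le_of_lipschitzOn ℝ (isOpen_ball.mem_nhds hxb) hL
      have h5 : ‖fderiv ℝ w x‖ ≤ ‖fderiv ℝ u x‖ + q := by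
        have := norm_sub_norm_le (fderiv ℝ w x) (fderiv ℝ u x)
        linarith
      have h6 : ‖fderiv ℝ w x‖₊ ^ 2 ≤ ‖fderiv ℝ u x‖₊ ^ 2 + c := by
        rw [← NNReal.coe_le_coe]
        push_cast [hc]
        have h7 : ‖fderiv ℝ w x‖ ^ 2 ≤ (‖fderiv ℝ u x‖ + q) ^ 2 := by gcongr
        have h8 : ‖fderiv ℝ u x‖ * q ≤ L * q := by gcongr
        nlinarith
      have h9 : ((‖fderiv ℝ w x‖₊ : ℝ≥0∞)) ^ 2 ≤ (‖fderiv ℝ u x‖₊ : ℝ≥0∞) ^ 2 + c := by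
        exact_mod_cast h6
      calc _ ≤ (‖fderiv ℝ u x‖₊ : ℝ≥0∞) ^ 2 + c + 1 := by gcongr
        _ = _ := by ring
  have hint := lintegral_mono_ae key
  have hm1 : MeasurableSet ({x | 0 < u x} ∩ ball x0 s) := hpos.inter measurableSet_ball
  have hm2 : MeasurableSet ({x | 0 < u x} ∩ ball x0 r) := hpos.inter measurableSet_ball
  rw [lintegral_add_right _ (measurable_one.indicator hm1),
    lintegral_add_right _ ((measurable_one.indicator hm2).const_mul _),
    lintegral_const_mul _ (measurable_one.indicator hm2),
    lintegral_indicator_one hm1, lintegral_indicator_one hm2,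
    Measure.restrict_apply hm1, Measure.restrict_apply hm2] at hint
  change JE (ball x0 r) w + _ ≤ JE (ball x0 r) u + _ at hint
  have e1 : {x | 0 < u x} ∩ ball x0 s ∩ ball x0 r = {x | 0 < u x} ∩ ball x0 s := by
    apply inter_eq_self_of_subset_left
    exact inter_subset_right.trans (ball_subset_ball hsr.le)
  have e2 : {x | 0 < u x} ∩ ball x0 r ∩ ball x0 r = {x | 0 < u x} ∩ ball x0 r :=
    inter_eq_self_of_subset_left inter_subset_right
  rw [e1, e2] at hint
  have := (add_le_add_left hJ _).trans hint
  exact (ENNReal.add_le_add_iff_left hfin).1 this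

lemma vanish_pt (n : ℕ) (hn : 0 < n) (L : ℝ≥0) (hL1 : 1 ≤ L) (r : ℝ) (hr : 0 < r) :
    ∃ δ : ℝ, 0 < δ ∧ ∀ (Ω : Set (EuclideanSpace ℝ (Fin n))) (u : (EuclideanSpace ℝ (Fin n)) → ℝ) (x0 : EuclideanSpace ℝ (Fin n)), IsMinimizer Ω u →
      ball x0 r ⊆ Ω → LipschitzOnWith L u (ball x0 r) → (∀ x ∈ ball x0 r, u x ≤ δ) →
      u x0 = 0 := by
  have : Nonempty (Fin n) := ⟨⟨0, hn⟩⟩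
  set θ : ℝ≥0 := (1 / 2) ^ (n + 1) with hθ
  have hθ0 : 0 < θ := by positivity
  have hθ1 : θ ≤ 1 := pow_le_one₀ (by positivity) (by
    rw [← NNReal.coe_le_coe]; push_cast; norm_num)
  have hL0 : 0 < L := lt_of_lt_of_le one_pos hL1
  set κ : ℝ≥0 := θ / (8 * L) with hκ
  have hκ0 : 0 < κ := by positivity
  have hL1' : (1 : ℝ) ≤ L := by exact_mod_cast hL1
  have hθ1' : (θ : ℝ) ≤ 1 := by exact_mod_cast hθ1
  have hθ0' : (0 : ℝ) < θ := by exact_mod_cast hθ0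
  have hκ0' : (0 : ℝ) < κ := by exact_mod_cast hκ0
  have hκL : (κ : ℝ) * (8 * L) = θ := by
    rw [hκ]; push_cast; field_simp
  have hκ1 : (κ : ℝ) * 8 ≤ 1 := by nlinarith
  have hcoef : 2 * L * (2 * κ) + (2 * κ) ^ 2 ≤ θ := by
    rw [← NNReal.coe_le_coe]; push_cast
    nlinarith
  obtain ⟨j0, hj0⟩ := exists_pow_lt_of_lt_one (show (0 : ℝ) < (κ / (2 * L)) ^ n by positivity)
    (show (1 / 2 : ℝ) < 1 by norm_num)
  set R : ℕ → ℝ := fun j => r * (1 / 2) ^ j with hR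
  have hR0 : ∀ j, 0 < R j := fun j => by positivity
  have hRs : ∀ j, R (j + 1) = R j / 2 := fun j => by simp only [hR, pow_succ]; ring
  have hRr : ∀ j, R j ≤ r := fun j => by
    simp only [hR]
    exact mul_le_of_le_one_right hr.le (pow_le_one₀ (by norm_num) (by norm_num))
  refine ⟨κ * R j0, by have := hR0 j0; positivity, ?_⟩
  intro Ω u x0 hu hb hL hδ
  have claim : ∀ j, (∀ x ∈ ball x0 (R j), u x ≤ κ * R j) ∧
      volume ({x | 0 < u x} ∩ ball x0 (R j)) ≤ ((θ ^ j : ℝ≥0) : ℝ≥0∞) * volume (ball x0 r) := by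
    intro j
    induction j with
    | zero =>
      have h0 : R 0 = r := by simp [hR]
      rw [h0]
      refine ⟨fun x hx => (hδ x hx).trans ?_, ?_⟩
      · have := hRr j0
        gcongr
      · simp only [pow_zero, ENNReal.coe_one, one_mul]
        exact measure_mono inter_subset_right
    | succ j ih =>
      obtain ⟨ih1, ih2⟩ := ih
      have hRj := hR0 j
      have hsub : ball x0 (R j) ⊆ ball x0 r := ball_subset_ball (hRr j)
      refine ⟨?_, ?_⟩
      · rcases le_or_gt (j + 1) j0 with hj | hj
        · intro x hx
          refine (hδ x (ball_subset_ball (hRr _) hx)).trans ?_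
          have : R j0 ≤ R (j + 1) := by
            simp only [hR]
            gcongr r * ?_
            exact pow_le_pow_of_le_one (by norm_num) (by norm_num) hj
          gcongr
        · intro y hy
          by_contra hcon
          push Not at hcon
          have hy' : dist y x0 < R (j + 1) := hy
          have hyb : y ∈ ball x0 (R j) := by
            rw [mem_ball]; have := hRs j; linarith
          set ρ : ℝ := κ * R (j + 1) / L with hρ
          have hρ0 : 0 < ρ := by have := hR0 (j+1); positivity
          have hLρ : L * ρ = κ * R (j + 1) := by rw [hρ]; field_simp
          have hρR : ρ ≤ R (j + 1) := by
            have := hR0 (j+1)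
            nlinarith
          have hincl : ball y ρ ⊆ {x | 0 < u x} ∩ ball x0 (R j) := by
            intro z hz
            have hz' : dist z y < ρ := hz
            have hzb : z ∈ ball x0 (R j) := by
              rw [mem_ball]
              have := dist_triangle z y x0
              have := hRs j
              linarith
            refine ⟨?_, hzb⟩
            have h1 := hL.dist_le_mul y (hsub hyb) z (hsub hzb)
            rw [Real.dist_eq] at h1
            have h2 := le_abs_self (u y - u z)
            have h3 : L * dist y z ≤ L * ρ := by
              rw [dist_comm]; gcongr
            show 0 < u z
            linarith
          have hvol := (measure_mono (μ := volume) hincl).trans ih2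
          rw [Measure.addHaar_ball volume y hρ0.le, Measure.addHaar_ball volume x0 hr.le,
            ← mul_assoc] at hvol
          have hω0 : volume (ball (0 : EuclideanSpace ℝ (Fin n)) 1) ≠ 0 := (measure_ball_pos _ _ one_pos).ne'
          have hω1 : volume (ball (0 : EuclideanSpace ℝ (Fin n)) 1) ≠ ∞ := measure_ball_lt_top.ne
          rw [ENNReal.mul_le_mul_iff_left hω0 hω1, finrank_euclideanSpace_fin,
            ← ENNReal.ofReal_coe_nnreal, ← ENNReal.ofReal_mul (by positivity),
            ENNReal.ofReal_le_ofReal_iff (by positivity)] at hvol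
          have e1 : ρ = (κ / (2 * L)) * (r * (1 / 2) ^ j) := by
            rw [hρ, hRs]; simp only [hR]; field_simp
          rw [e1, mul_pow, mul_pow, mul_comm (r ^ n), ← mul_assoc] at hvol
          have h4 : (κ / (2 * L) : ℝ) ^ n * ((1 / 2) ^ j) ^ n ≤ (θ ^ j : ℝ≥0) :=
            le_of_mul_le_mul_right hvol (by positivity)
          have h5 : ((θ ^ j : ℝ≥0) : ℝ) = (1 / 2) ^ j * ((1 / 2) ^ j) ^ n := by
            rw [hθ]; push_cast
            rw [← pow_mul, ← pow_mul, ← pow_add]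
            congr 1; ring
          rw [h5] at h4
          have h6 := le_of_mul_le_mul_right h4 (by positivity)
          have h7 : (1 / 2 : ℝ) ^ j ≤ (1 / 2) ^ j0 :=
            pow_le_pow_of_le_one (by norm_num) (by norm_num) (by omega)
          linarith
      · have hst := step hu (x0 := x0) (r := R j) (s := R (j + 1)) (δ := κ * R j) (L := L)
          (hsub.trans hb) (hL.mono hsub) ih1 (by positivity) (by rw [hRs]; linarith) (2 * κ)
          (by rw [hRs]; push_cast; field_simp; ring)
        refine hst.trans ?_
        calc _ ≤ (θ : ℝ≥0∞) * (((θ ^ j : ℝ≥0) : ℝ≥0∞) * volume (ball x0 r)) := by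
              gcongr
          _ = _ := by
            rw [← mul_assoc, ← ENNReal.coe_mul, pow_succ, mul_comm θ]
  refine le_antisymm ?_ (hu.1 x0)
  have hlim : Tendsto (fun j : ℕ => (κ : ℝ) * (r * (1 / 2) ^ j)) atTop (nhds (κ * (r * 0))) :=
    ((_root_.tendsto_pow_atTop_nhds_zero_of_lt_one (by norm_num) (by norm_num)).const_mul _).const_mul _
  rw [mul_zero, mul_zero] at hlim
  exact ge_of_tendsto' hlim fun j => (claim j).1 x0 (mem_ball_self (hR0 j))

lemma lip_of_zero_outside {n : ℕ} {f : (EuclideanSpace ℝ (Fin n)) → ℝ} (hf : LocallyLipschitz f) (c : EuclideanSpace ℝ (Fin n)) (R : ℝ)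
    (h0 : ∀ x, x ∉ ball c R → f x = 0) : ∃ D : ℝ≥0, LipschitzWith D f := by
  obtain ⟨C, hC⟩ := (hf.locallyLipschitzOn
    (s := closedBall c (R + 1))).exists_lipschitzOnWith_of_compact (isCompact_closedBall c (R + 1))
  obtain ⟨M, hM⟩ := (isCompact_closedBall c (R + 1)).exists_bound_of_continuousOn
    hf.continuous.continuousOn
  have hsub : ball c R ⊆ closedBall c (R + 1) :=
    ball_subset_closedBall.trans (closedBall_subset_closedBall (by linarith))
  have aux : ∀ x y, x ∈ ball c R → y ∉ closedBall c (R + 1) →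
      |f x - f y| ≤ (max C M.toNNReal : ℝ≥0) * dist x y := by
    intro x y hx hy
    rw [h0 y (fun h => hy (hsub h)), sub_zero]
    have hd : 1 ≤ dist x y := by
      have h1 : dist x c < R := hx
      have h2 : R + 1 < dist y c := by simpa using hy
      have := dist_triangle y x c
      rw [dist_comm y x] at this
      linarith
    have hb := hM x (hsub hx)
    rw [Real.norm_eq_abs] at hb
    calc |f x| ≤ M := hb
      _ ≤ (max C M.toNNReal : ℝ≥0) := by
        rw [NNReal.coe_max]
        exact (Real.le_coe_toNNReal M).trans (le_max_right _ _)
      _ ≤ _ := le_mul_of_one_le_right (NNReal.coe_nonneg _) hd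
  refine ⟨max C M.toNNReal, LipschitzWith.of_dist_le_mul fun x y => ?_⟩
  rw [Real.dist_eq]
  by_cases hx : x ∈ ball c R
  · by_cases hy : y ∈ closedBall c (R + 1)
    · have := hC.dist_le_mul x (hsub hx) y hy
      rw [Real.dist_eq] at this
      refine this.trans ?_
      gcongr
      exact le_max_left _ _
    · exact aux x y hx hy
  · by_cases hy : y ∈ ball c R
    · by_cases hx' : x ∈ closedBall c (R + 1)
      · have := hC.dist_le_mul x hx' y (hsub hy)
        rw [Real.dist_eq] at this
        refine this.trans ?_
        gcongr
        exact le_max_left _ _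
      · rw [abs_sub_comm, dist_comm]
        exact aux y x hy hx'
    · rw [h0 x hx, h0 y hy]
      simp only [sub_self, abs_zero]
      positivity

lemma ibp {n : ℕ} {V ψ : (EuclideanSpace ℝ (Fin n)) → ℝ} (hV : ContDiff ℝ 1 V) {D : ℝ≥0} (hψ : LipschitzWith D ψ)
    (c : EuclideanSpace ℝ (Fin n)) (R : ℝ) (h0 : ∀ x, x ∉ ball c R → ψ x = 0) (e : EuclideanSpace ℝ (Fin n)) :
    ∫ x, fderiv ℝ V x e * ψ x = - ∫ x, lineDeriv ℝ ψ x e * V x := by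
  have hVl : LocallyLipschitz V := hV.locallyLipschitz
  obtain ⟨C, hC⟩ := (hVl.locallyLipschitzOn
    (s := closedBall c (R + 1))).exists_lipschitzOnWith_of_compact (isCompact_closedBall c (R + 1))
  obtain ⟨W, hW, hWV⟩ := hC.extend_real
  have hsub : ball c R ⊆ ball c (R + 1) := ball_subset_ball (by linarith)
  have hcs : HasCompactSupport ψ :=
    HasCompactSupport.intro (isCompact_closedBall c R)
      (fun x hx => h0 x (fun h => hx (ball_subset_closedBall h)))
  have key := hW.integral_lineDeriv_mul_eq (μ := volume) hψ hcs e
  have e1 : ∀ x, lineDeriv ℝ W x e * ψ x = fderiv ℝ V x e * ψ x := by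
    intro x
    by_cases hx : x ∈ ball c R
    · have : W =ᶠ[nhds x] V := by
        filter_upwards [isOpen_ball.mem_nhds (hsub hx)] with y hy
        exact (hWV (ball_subset_closedBall hy)).symm
      rw [this.lineDeriv_eq, (hV.differentiable (by simp)).differentiableAt.lineDeriv_eq_fderiv]
    · rw [h0 x hx]; simp
  have e2 : ∀ x, lineDeriv ℝ ψ x (-e) * W x = - (lineDeriv ℝ ψ x e * V x) := by
    intro x
    rw [lineDeriv_neg]
    by_cases hx : x ∈ closedBall c (R + 1)
    · rw [← hWV hx]; ring
    · have : ψ =ᶠ[nhds x] fun _ => 0 := by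
        filter_upwards [isClosed_closedBall.isOpen_compl.mem_nhds hx] with y hy
        exact h0 y (fun h => hy (ball_subset_closedBall (hsub h)))
      rw [this.lineDeriv_eq]; simp [lineDeriv]
  simp_rw [e1, e2] at key
  rw [key, integral_neg]

lemma integrable_ibp {n : ℕ} {V ψ : (EuclideanSpace ℝ (Fin n)) → ℝ} (hV : Continuous V) {D : ℝ≥0}
    (hψ : LipschitzWith D ψ)
    (c : EuclideanSpace ℝ (Fin n)) (R : ℝ) (h0 : ∀ x, x ∉ ball c R → ψ x = 0) (e : EuclideanSpace ℝ (Fin n)) :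
    Integrable (fun x => lineDeriv ℝ ψ x e * V x) volume := by
  have h1 : IntegrableOn V (closedBall c (R + 1)) volume :=
    hV.continuousOn.integrableOn_compact (isCompact_closedBall c (R + 1))
  have h2 : IntegrableOn (fun x => lineDeriv ℝ ψ x e * V x) (closedBall c (R + 1)) volume := by
    have hm := (hψ.memLp_lineDeriv (μ := volume) e).aestronglyMeasurable
    refine Integrable.bdd_mul (c := D * ‖e‖) h1 hm.restrict ?_
    exact Eventually.of_forall fun x => norm_lineDeriv_le_of_lipschitz ℝ hψ
  rw [← integrableOn_univ]
  refine h2.of_forall_sdiff_eq_zero MeasurableSet.univ ?_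
  intro x hx
  have : ψ =ᶠ[nhds x] fun _ => 0 := by
    filter_upwards [isClosed_closedBall.isOpen_compl.mem_nhds hx.2] with y hy
    exact h0 y (fun h => hy (ball_subset_closedBall (ball_subset_ball (by linarith) h)))
  rw [this.lineDeriv_eq]; simp [lineDeriv]

lemma hasFDerivAt_gauss {n : ℕ} (c : EuclideanSpace ℝ (Fin n)) (α : ℝ) (x : EuclideanSpace ℝ (Fin n)) :
    HasFDerivAt (fun x : EuclideanSpace ℝ (Fin n) => Real.exp (-α * ‖x - c‖ ^ 2))
      ((Real.exp (-α * ‖x - c‖ ^ 2) * (-2 * α)) • innerSL ℝ (x - c)) x := by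
  have h1 : HasFDerivAt (fun x : EuclideanSpace ℝ (Fin n) => x - c) (ContinuousLinearMap.id ℝ (EuclideanSpace ℝ (Fin n))) x :=
    (hasFDerivAt_id x).sub_const c
  have h2 := (h1.norm_sq.const_mul (-α)).exp
  have e : (Real.exp (-α * ‖x - c‖ ^ 2) * (-2 * α)) • innerSL ℝ (x - c) =
      Real.exp (-α * ‖x - c‖ ^ 2) • -α • 2 • (innerSL ℝ (x - c)).comp
        (ContinuousLinearMap.id ℝ (EuclideanSpace ℝ (Fin n))) := by
    refine ContinuousLinearMap.ext fun v => ?_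
    simp only [_root_.smul_apply, ContinuousLinearMap.comp_apply, smul_eq_mul,
      nsmul_eq_mul, ContinuousLinearMap.id_apply]
    push_cast
    ring
  rw [e]
  exact h2

lemma fderiv_gauss_basis {n : ℕ} (c : EuclideanSpace ℝ (Fin n)) (α a b : ℝ) (x : EuclideanSpace ℝ (Fin n)) (i : Fin n) :
    fderiv ℝ (fun x : EuclideanSpace ℝ (Fin n) => a * (Real.exp (-α * ‖x - c‖ ^ 2) - b)) x
      (EuclideanSpace.basisFun (Fin n) ℝ i) =
      a * (-2 * α * (x i - c i) * Real.exp (-α * ‖x - c‖ ^ 2)) := by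
  rw [(((hasFDerivAt_gauss c α x).sub_const b).const_mul a).fderiv]
  simp [EuclideanSpace.inner_single_right]
  left
  ring

lemma fderiv_V {n : ℕ} (c : EuclideanSpace ℝ (Fin n)) (α a : ℝ) (x : EuclideanSpace ℝ (Fin n)) (i : Fin n) :
    fderiv ℝ (fun x : EuclideanSpace ℝ (Fin n) => a * (-2 * α * (x i - c i) * Real.exp (-α * ‖x - c‖ ^ 2))) x
      (EuclideanSpace.basisFun (Fin n) ℝ i) =
      a * ((4 * α ^ 2 * (x i - c i) ^ 2 - 2 * α) * Real.exp (-α * ‖x - c‖ ^ 2)) := by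
  have h1 : HasFDerivAt (fun x : EuclideanSpace ℝ (Fin n) => x i - c i)
      (EuclideanSpace.proj i : (EuclideanSpace ℝ (Fin n)) →L[ℝ] ℝ) x :=
    (EuclideanSpace.proj i : (EuclideanSpace ℝ (Fin n)) →L[ℝ] ℝ).hasFDerivAt.sub_const (c i)
  have h2 := ((h1.const_mul (-2 * α)).fun_mul (hasFDerivAt_gauss c α x)).const_mul a
  rw [h2.fderiv]
  simp [EuclideanSpace.inner_single_right]
  ring

lemma JE_eq_of_pos {n : ℕ} {u : (EuclideanSpace ℝ (Fin n)) → ℝ} {c : EuclideanSpace ℝ (Fin n)} {R : ℝ} {L : ℝ≥0}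
    (hL : LipschitzOnWith L u (ball c R)) (hpos : ∀ x ∈ ball c R, 0 < u x) :
    IntegrableOn (fun x => ‖gradient u x‖ ^ 2) (ball c R) volume ∧
    JE (ball c R) u = ENNReal.ofReal (∫ x in ball c R, ‖gradient u x‖ ^ 2) +
      volume (ball c R) := by
  have hmeas : Measurable (fun x => ‖gradient u x‖ ^ 2) := by
    have : (fun x => ‖gradient u x‖ ^ 2) = fun x => ‖fderiv ℝ u x‖ ^ 2 := by
      ext x
      rw [← coe_nnnorm, nnnorm_gradient, coe_nnnorm]
    rw [this]
    exact (measurable_fderiv ℝ u).norm.pow_const 2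
  have hint : IntegrableOn (fun x => ‖gradient u x‖ ^ 2) (ball c R) volume := by
    refine Measure.integrableOn_of_bounded (M := (L : ℝ) ^ 2) measure_ball_lt_top.ne
      hmeas.aestronglyMeasurable ?_
    filter_upwards [ae_restrict_mem measurableSet_ball] with x hx
    rw [Real.norm_of_nonneg (by positivity), ← coe_nnnorm, nnnorm_gradient, coe_nnnorm]
    gcongr
    exact norm_fderiv_le_of_lipschitzOn ℝ (isOpen_ball.mem_nhds hx) hL
  refine ⟨hint, ?_⟩
  rw [ofReal_integral_eq_lintegral_ofReal hint (Eventually.of_forall fun x => by positivity)]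
  unfold JE
  have : volume (ball c R) = ∫⁻ x in ball c R, 1 := by simp
  rw [this, ← lintegral_add_right _ measurable_const]
  apply setLIntegral_congr_fun measurableSet_ball
  intro x hx
  simp only [hpos x hx, if_true]
  congr 1
  rw [ENNReal.ofReal_pow (norm_nonneg _), ← coe_nnnorm, ENNReal.ofReal_coe_nnreal]

lemma harnack {n : ℕ} (hn : 0 < n) {Ω : Set (EuclideanSpace ℝ (Fin n))} {u : (EuclideanSpace ℝ (Fin n)) → ℝ} (hu : IsMinimizer Ω u)
    {c : EuclideanSpace ℝ (Fin n)} {R ρ a α : ℝ} (hb : ball c R ⊆ Ω) (hpos : ∀ x ∈ ball c R, 0 < u x)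
    (hR : 0 < R) (ha : 0 < a) (hρ : 0 < ρ) (hua : ∀ x ∈ ball c ρ, a ≤ u x)
    (hα : α = n / ρ ^ 2) (x : EuclideanSpace ℝ (Fin n)) :
    a * (Real.exp (-α * ‖x - c‖ ^ 2) - Real.exp (-α * R ^ 2)) ≤ u x := by
  obtain ⟨hu0, hul, humin⟩ := hu
  have hn' : (0 : ℝ) < n := by exact_mod_cast hn
  have hα0 : 0 < α := by rw [hα]; positivity
  have hαρ : α * ρ ^ 2 = n := by rw [hα]; field_simp
  have hG : ContDiff ℝ 2 (fun x : EuclideanSpace ℝ (Fin n) => Real.exp (-α * ‖x - c‖ ^ 2)) :=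
    (contDiff_const.mul ((contDiff_id.sub contDiff_const).norm_sq ℝ)).exp
  set φ : (EuclideanSpace ℝ (Fin n)) → ℝ := fun x => a * (Real.exp (-α * ‖x - c‖ ^ 2) - Real.exp (-α * R ^ 2)) with hφ
  have hφc : ContDiff ℝ 2 φ := contDiff_const.mul (hG.sub contDiff_const)
  have hφd : Differentiable ℝ φ := hφc.differentiable (by simp)
  have hφl : LocallyLipschitz φ := (hφc.of_le (by norm_num)).locallyLipschitz
  have hφa : ∀ x, φ x < a := by
    intro x
    have h1 : Real.exp (-α * ‖x - c‖ ^ 2) ≤ 1 := by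
      rw [Real.exp_le_one_iff]
      have : 0 ≤ α * ‖x - c‖ ^ 2 := by positivity
      linarith
    have h2 := Real.exp_pos (-α * R ^ 2)
    simp only [hφ]
    nlinarith
  have hφout : ∀ x, x ∉ ball c R → φ x ≤ 0 := by
    intro x hx
    have hx' : R ≤ ‖x - c‖ := by simpa [dist_eq_norm] using hx
    have h1 : Real.exp (-α * ‖x - c‖ ^ 2) ≤ Real.exp (-α * R ^ 2) := by
      apply Real.exp_le_exp.2
      have : α * R ^ 2 ≤ α * ‖x - c‖ ^ 2 := by gcongr
      linarith
    simp only [hφ]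
    exact mul_nonpos_of_nonneg_of_nonpos ha.le (by linarith)
  set ψ : (EuclideanSpace ℝ (Fin n)) → ℝ := fun x => max (φ x - u x) 0 with hψ
  have hψ0 : ∀ x, 0 ≤ ψ x := fun x => le_max_right _ _
  have hψl : LocallyLipschitz ψ := by
    have : LocallyLipschitz (fun x => φ x - u x) := hφl.sub hul
    exact this.max_const 0
  have hψout : ∀ x, x ∉ ball c R → ψ x = 0 := by
    intro x hx
    exact max_eq_right (by linarith [hφout x hx, hu0 x])
  have hψin : ∀ x ∈ ball c ρ, ψ x = 0 := by
    intro x hx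
    exact max_eq_right (by linarith [hφa x, hua x hx])
  obtain ⟨D, hD⟩ := lip_of_zero_outside hψl c R hψout
  set w : (EuclideanSpace ℝ (Fin n)) → ℝ := fun x => u x + ψ x with hw
  have hw0 : ∀ x, 0 ≤ w x := fun x => add_nonneg (hu0 x) (hψ0 x)
  have hwl : LocallyLipschitz w := hul.add hψl
  have hne : {x | w x ≠ u x} ⊆ ball c R := by
    intro x hx
    by_contra hxb
    apply hx
    simp only [hw]
    rw [hψout x hxb, add_zero]
  have hJ := humin w hw0 hwl (isBounded_ball.subset hne) (hne.trans hb) c R hne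
  rw [inter_eq_self_of_subset_right hb] at hJ
  obtain ⟨Lu, hLu⟩ := (hul.locallyLipschitzOn (s := closedBall c R)).exists_lipschitzOnWith_of_compact
    (isCompact_closedBall c R)
  obtain ⟨Lw, hLw⟩ := (hwl.locallyLipschitzOn (s := closedBall c R)).exists_lipschitzOnWith_of_compact
    (isCompact_closedBall c R)
  obtain ⟨iu, ju⟩ := JE_eq_of_pos (hLu.mono ball_subset_closedBall) hpos
  obtain ⟨iw, jw⟩ := JE_eq_of_pos (hLw.mono ball_subset_closedBall)
    (fun x hx => add_pos_of_pos_of_nonneg (hpos x hx) (hψ0 x))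
  rw [ju, jw, ENNReal.add_le_add_iff_right measure_ball_lt_top.ne,
    ENNReal.ofReal_le_ofReal_iff (integral_nonneg fun x => by positivity)] at hJ
  let b := EuclideanSpace.basisFun (Fin n) ℝ
  let V : Fin n → (EuclideanSpace ℝ (Fin n)) → ℝ := fun i x =>
    a * (-2 * α * (x i - c i) * Real.exp (-α * ‖x - c‖ ^ 2))
  have hVc : ∀ i, ContDiff ℝ 1 (V i) := by
    intro i
    have h1 : ContDiff ℝ 1 (fun x : EuclideanSpace ℝ (Fin n) => x i) :=
      (EuclideanSpace.proj i : (EuclideanSpace ℝ (Fin n)) →L[ℝ] ℝ).contDiff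
    exact contDiff_const.mul ((contDiff_const.mul (h1.sub contDiff_const)).mul
      (hG.of_le (by norm_num)))
  let I : (EuclideanSpace ℝ (Fin n)) → ℝ := fun x => ∑ i, lineDeriv ℝ ψ x (b i) * V i x
  have hIi : Integrable I volume :=
    integrable_finsetSum _ fun i _ => integrable_ibp (hVc i).continuous hD c R hψout (b i)
  have hI : ∀ x, DifferentiableAt ℝ ψ x → I x = inner ℝ (gradient ψ x) (gradient φ x) := by
    intro x hx
    rw [← b.sum_inner_mul_inner]
    simp only [I]
    refine Finset.sum_congr rfl fun i _ => ?_
    rw [hx.lineDeriv_eq_fderiv, inner_gradient_left, real_inner_comm, inner_gradient_left,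
      fderiv_gauss_basis]
  have hIout : ∀ x, ψ x = 0 → I x = 0 := by
    intro x hx
    have hmin : ∀ i, lineDeriv ℝ ψ x (b i) = 0 := by
      intro i
      have : IsLocalMin (fun t : ℝ => ψ (x + t • b i)) 0 := Eventually.of_forall fun t => by
        simp only [zero_smul, add_zero, hx]; exact hψ0 _
      exact this.deriv_eq_zero
    simp only [I, hmin, zero_mul, Finset.sum_const_zero]
  have hpt : ∀ᵐ x ∂(volume.restrict (ball c R)),
      ‖gradient w x‖ ^ 2 ≤ ‖gradient u x‖ ^ 2 + 2 * I x := by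
    filter_upwards [ae_diff_ball hul c R, ae_diff_ball hψl c R] with x hxu hxψ
    have hgw : gradient w x = gradient u x + gradient ψ x := by
      have h1 : fderiv ℝ w x = fderiv ℝ u x + fderiv ℝ ψ x := fderiv_fun_add hxu hxψ
      simp only [gradient, h1, map_add]
    rw [hgw, hI x hxψ]
    rcases (hψ0 x).eq_or_lt with h0 | h0
    · have hmin : IsLocalMin ψ x := Filter.Eventually.of_forall fun y => by
        rw [← h0]; exact hψ0 y
      have : gradient ψ x = 0 := by
        simp only [gradient, hmin.fderiv_eq_zero, map_zero]
      rw [this]; simp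
    · have hlt : u x < φ x := by
        by_contra hcon
        simp only [hψ] at h0
        rw [max_eq_right (by linarith)] at h0
        exact lt_irrefl _ h0
      have hloc : ψ =ᶠ[nhds x] fun y => φ y - u y := by
        filter_upwards [(isOpen_lt hul.continuous hφl.continuous).mem_nhds hlt] with y hy
        have hy' : u y < φ y := hy
        exact max_eq_left (by linarith)
      have hgψ : gradient ψ x = gradient φ x - gradient u x := by
        have h1 : fderiv ℝ ψ x = fderiv ℝ φ x - fderiv ℝ u x := by
          rw [hloc.fderiv_eq]
          exact fderiv_fun_sub (hφd x) hxu
        simp only [gradient, h1, map_sub]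
      have hgφ : gradient φ x = gradient u x + gradient ψ x := by rw [hgψ]; abel
      rw [hgφ, inner_add_right, real_inner_self_eq_norm_sq, norm_add_sq_real,
        real_inner_comm (gradient ψ x)]
      nlinarith [sq_nonneg ‖gradient ψ x‖]
  have hint := integral_mono_ae iw (iu.add (hIi.integrableOn.const_mul 2)) hpt
  have hint2 : 0 ≤ ∫ x in ball c R, I x := by
    simp only [Pi.add_apply] at hint
    rw [integral_add iu (hIi.integrableOn.const_mul 2), integral_const_mul] at hint
    linarith
  rw [setIntegral_eq_integral_of_forall_compl_eq_zero
    (fun x hx => hIout x (hψout x hx))] at hint2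
  have hsum : ∫ x, I x = ∑ i, ∫ x, lineDeriv ℝ ψ x (b i) * V i x :=
    integral_finsetSum _ fun i _ => integrable_ibp (hVc i).continuous hD c R hψout (b i)
  have hcs : HasCompactSupport ψ :=
    HasCompactSupport.intro (isCompact_closedBall c R)
      (fun x hx => hψout x (fun h => hx (ball_subset_closedBall h)))
  have hterm : ∀ i, ∫ x, lineDeriv ℝ ψ x (b i) * V i x = - ∫ x, fderiv ℝ (V i) x (b i) * ψ x := by
    intro i
    rw [ibp (hVc i) hD c R hψout (b i), neg_neg]
  have hterm_int : ∀ i, Integrable (fun x => fderiv ℝ (V i) x (b i) * ψ x) volume := by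
    intro i
    refine Continuous.integrable_of_hasCompactSupport ?_ hcs.mul_left
    exact (((hVc i).continuous_fderiv (by simp)).clm_apply continuous_const).mul hD.continuous
  let H : (EuclideanSpace ℝ (Fin n)) → ℝ := fun x =>
    a * ((4 * α ^ 2 * ‖x - c‖ ^ 2 - 2 * α * n) * Real.exp (-α * ‖x - c‖ ^ 2))
  have hHsum : ∀ x, ∑ i, fderiv ℝ (V i) x (b i) * ψ x = H x * ψ x := by
    intro x
    rw [← Finset.sum_mul]
    congr 1
    simp only [V, b, H, fderiv_V]
    rw [← Finset.mul_sum, ← Finset.sum_mul, Finset.sum_sub_distrib, ← Finset.mul_sum,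
      EuclideanSpace.norm_sq_eq]
    simp
    left; ring
  have hHint : ∫ x, H x * ψ x ≤ 0 := by
    rw [hsum] at hint2
    simp_rw [hterm] at hint2
    rw [Finset.sum_neg_distrib, ← integral_finsetSum _ fun i _ => hterm_int i] at hint2
    simp_rw [hHsum] at hint2
    linarith
  have hHpos : ∀ x, ψ x ≠ 0 → 0 < H x := by
    intro x hx
    have hxρ : ρ ≤ ‖x - c‖ := by
      by_contra hcon
      apply hx
      apply hψin
      rw [mem_ball, dist_eq_norm]; linarith
    have h1 : (n : ℝ) ≤ α * ‖x - c‖ ^ 2 := by rw [← hαρ]; gcongr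
    have h2 : 0 < 4 * α ^ 2 * ‖x - c‖ ^ 2 - 2 * α * n := by
      have : α * n ≤ α * (α * ‖x - c‖ ^ 2) := by gcongr
      have : 0 < α * n := by positivity
      nlinarith
    have := Real.exp_pos (-α * ‖x - c‖ ^ 2)
    simp only [H]
    positivity
  have hHc : Continuous (fun x => H x * ψ x) := by
    have h1 : Continuous (fun x : EuclideanSpace ℝ (Fin n) => Real.exp (-α * ‖x - c‖ ^ 2)) := hG.continuous
    have h2 := hD.continuous
    simp only [H]
    fun_prop
  have hH0 : ∀ x, 0 ≤ H x * ψ x := by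
    intro x
    by_cases hx : ψ x = 0
    · rw [hx, mul_zero]
    · exact mul_nonneg (hHpos x hx).le (hψ0 x)
  by_contra hcon
  have hx : 0 < ψ x := by
    have : φ x ≤ ψ x + u x := by linarith [le_max_left (φ x - u x) 0]
    exact lt_max_of_lt_left (by linarith)
  have := hHc.integral_pos_of_hasCompactSupport_nonneg_nonzero (μ := volume) hcs.mul_left hH0
    (x := x) (mul_pos (hHpos x hx.ne') hx).ne'
  linarith

lemma unif_near {n : ℕ} {u : ℕ → (EuclideanSpace ℝ (Fin n)) → ℝ}
    (hlip : ∀ K : Set (EuclideanSpace ℝ (Fin n)), IsCompact K → ∃ L : ℝ≥0, ∀ k, LipschitzOnWith L (u k) K)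
    {v : (EuclideanSpace ℝ (Fin n)) → ℝ} (hconv : ∀ x, Tendsto (fun k => u k x) atTop (nhds (v x)))
    (x0 : EuclideanSpace ℝ (Fin n)) {η : ℝ} (hη : 0 < η) :
    ∃ ρ > 0, ∀ᶠ k in atTop, ∀ x ∈ ball x0 ρ, |u k x - v x0| < η := by
  obtain ⟨L, hL⟩ := hlip _ (isCompact_closedBall x0 1)
  refine ⟨min 1 (η / (2 * (L + 1))), by positivity, ?_⟩
  have h1 := (Metric.tendsto_nhds.1 (hconv x0)) (η / 2) (by positivity)
  filter_upwards [h1] with k hk x hx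
  have hx' : dist x x0 < min 1 (η / (2 * (L + 1))) := hx
  have hx1 : dist x x0 ≤ 1 := (hx'.trans_le (min_le_left _ _)).le
  have hx2 : dist x x0 < η / (2 * (L + 1)) := hx'.trans_le (min_le_right _ _)
  have h2 := (hL k).dist_le_mul x hx1 x0 (mem_closedBall_self (by norm_num))
  have h3 : (L : ℝ) * dist x x0 ≤ η / 2 := by
    have h4 : (L : ℝ) * dist x x0 ≤ (L + 1) * (η / (2 * (L + 1))) := by
      gcongr
      linarith
    have h5 : ((L : ℝ) + 1) * (η / (2 * (L + 1))) = η / 2 := by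
      field_simp
    linarith
  rw [← Real.dist_eq]
  have := dist_triangle (u k x) (u k x0) (v x0)
  linarith

lemma lim_cont {n : ℕ} {u : ℕ → (EuclideanSpace ℝ (Fin n)) → ℝ}
    (hlip : ∀ K : Set (EuclideanSpace ℝ (Fin n)), IsCompact K → ∃ L : ℝ≥0, ∀ k, LipschitzOnWith L (u k) K)
    {v : (EuclideanSpace ℝ (Fin n)) → ℝ} (hconv : ∀ x, Tendsto (fun k => u k x) atTop (nhds (v x))) :
    Continuous v := by
  rw [continuous_iff_continuousAt]
  intro x0
  rw [ContinuousAt, Metric.tendsto_nhds]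
  intro η hη
  obtain ⟨ρ, hρ, h⟩ := unif_near hlip hconv x0 (half_pos hη)
  filter_upwards [ball_mem_nhds x0 hρ] with x hx
  have h1 : |v x - v x0| ≤ η / 2 := by
    refine le_of_tendsto ((hconv x).sub_const (v x0)).abs ?_
    filter_upwards [h] with k hk
    exact (hk x hx).le
  rw [Real.dist_eq]
  linarith

lemma compact_ev {n : ℕ} {K : Set (EuclideanSpace ℝ (Fin n))} (hK : IsCompact K) {P : ℕ → (EuclideanSpace ℝ (Fin n)) → Prop}
    (h : ∀ x0 ∈ K, ∃ ρ > 0, ∀ᶠ k in atTop, ∀ x ∈ ball x0 ρ, P k x) :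
    ∀ᶠ k in atTop, ∀ x ∈ K, P k x := by
  refine hK.induction_on (p := fun s => ∀ᶠ k in atTop, ∀ x ∈ s, P k x) ?_ ?_ ?_ ?_
  · simp
  · intro s t hst ht
    filter_upwards [ht] with k hk x hx using hk x (hst hx)
  · intro s t hs ht
    filter_upwards [hs, ht] with k h1 h2 x hx
    exact hx.elim (h1 x) (h2 x)
  · intro x0 hx0
    obtain ⟨ρ, hρ, h1⟩ := h x0 hx0
    exact ⟨ball x0 ρ, mem_nhdsWithin_of_mem_nhds (ball_mem_nhds x0 hρ), h1⟩

lemma vanish {n : ℕ} (hn : 0 < n) {Ω : Set (EuclideanSpace ℝ (Fin n))} (hΩ : IsOpen Ω) {u : ℕ → (EuclideanSpace ℝ (Fin n)) → ℝ}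
    (hmin : ∀ k, IsMinimizer Ω (u k))
    (hlip : ∀ K : Set (EuclideanSpace ℝ (Fin n)), IsCompact K → ∃ L : ℝ≥0, ∀ k, LipschitzOnWith L (u k) K)
    {v : (EuclideanSpace ℝ (Fin n)) → ℝ} (hconv : ∀ x, Tendsto (fun k => u k x) atTop (nhds (v x)))
    {x0 : EuclideanSpace ℝ (Fin n)} (hx0 : x0 ∈ Ω) (hv : ∀ᶠ x in nhds x0, v x = 0) :
    ∃ ρ > 0, ∀ᶠ k in atTop, ∀ x ∈ ball x0 ρ, u k x = 0 := by
  obtain ⟨r, hr, hrs⟩ := Metric.nhds_basis_closedBall.mem_iff.1 (inter_mem (hΩ.mem_nhds hx0) hv)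
  obtain ⟨L, hL⟩ := hlip _ (isCompact_closedBall x0 r)
  obtain ⟨δ, hδ, hδv⟩ := vanish_pt n hn (max 1 L) (le_max_left _ _) (r / 2) (by positivity)
  have hsmall : ∀ᶠ k in atTop, ∀ x ∈ closedBall x0 r, u k x ≤ δ := by
    refine compact_ev (isCompact_closedBall x0 r) (P := fun k x => u k x ≤ δ) fun z hz => ?_
    obtain ⟨ρ, hρ, h⟩ := unif_near hlip hconv z hδ
    refine ⟨ρ, hρ, ?_⟩
    filter_upwards [h] with k hk x hx
    have h1 := hk x hx
    have h2 : v z = 0 := (hrs hz).2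
    rw [h2, sub_zero] at h1
    exact (le_abs_self _).trans h1.le
  refine ⟨r / 2, by positivity, ?_⟩
  filter_upwards [hsmall] with k hk x hx
  have hsub : ball x (r / 2) ⊆ closedBall x0 r := by
    intro z hz
    have h1 : dist z x < r / 2 := hz
    have h2 : dist x x0 < r / 2 := hx
    have := dist_triangle z x x0
    rw [mem_closedBall]; linarith
  exact hδv Ω (u k) x (hmin k) (fun z hz => (hrs (hsub hz)).1)
    (((hL k).mono hsub).weaken (le_max_right _ _)) (fun z hz => hk z (hsub hz))

lemma pos_near {n : ℕ} {u : ℕ → (EuclideanSpace ℝ (Fin n)) → ℝ}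
    (hlip : ∀ K : Set (EuclideanSpace ℝ (Fin n)), IsCompact K → ∃ L : ℝ≥0, ∀ k, LipschitzOnWith L (u k) K)
    {v : (EuclideanSpace ℝ (Fin n)) → ℝ} (hconv : ∀ x, Tendsto (fun k => u k x) atTop (nhds (v x)))
    {x0 : EuclideanSpace ℝ (Fin n)} (hv : 0 < v x0) :
    ∃ ρ > 0, ∀ᶠ k in atTop, ∀ x ∈ ball x0 ρ, v x0 / 2 ≤ u k x := by
  obtain ⟨ρ, hρ, h⟩ := unif_near hlip hconv x0 (half_pos hv)
  refine ⟨ρ, hρ, ?_⟩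
  filter_upwards [h] with k hk x hx
  have := (abs_lt.1 (hk x hx)).1
  linarith

lemma fb_near {n : ℕ} (hn : 0 < n) {Ω : Set (EuclideanSpace ℝ (Fin n))} {u : ℕ → (EuclideanSpace ℝ (Fin n)) → ℝ}
    (hmin : ∀ k, IsMinimizer Ω (u k))
    (hlip : ∀ K : Set (EuclideanSpace ℝ (Fin n)), IsCompact K → ∃ L : ℝ≥0, ∀ k, LipschitzOnWith L (u k) K)
    {v : (EuclideanSpace ℝ (Fin n)) → ℝ} (hconv : ∀ x, Tendsto (fun k => u k x) atTop (nhds (v x)))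
    {x0 : EuclideanSpace ℝ (Fin n)} (hx0 : x0 ∈ frontier {x | 0 < v x}) {r : ℝ} (hr : 0 < r) (hrΩ : ball x0 r ⊆ Ω) :
    ∀ᶠ k in atTop, ∃ y ∈ Ω ∩ frontier {x | 0 < u k x}, dist x0 y < r := by
  have hvc := lim_cont hlip hconv
  have hopen : IsOpen {x | 0 < v x} := isOpen_lt continuous_const hvc
  rw [hopen.frontier_eq] at hx0
  have hv0 : ¬ 0 < v x0 := hx0.2
  obtain ⟨y, hy, hyd⟩ := Metric.mem_closure_iff.1 hx0.1 (r / 2) (by positivity)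
  have hy : 0 < v y := hy
  obtain ⟨ρ, hρ, hpos⟩ := pos_near hlip hconv hy
  set α : ℝ := n / ρ ^ 2 with hα
  have hn' : (0 : ℝ) < n := by exact_mod_cast hn
  have hα0 : 0 < α := by positivity
  set m : ℝ := (v y / 2) * (Real.exp (-α * ‖x0 - y‖ ^ 2) - Real.exp (-α * (r / 2) ^ 2)) with hm
  have hm0 : 0 < m := by
    have : Real.exp (-α * (r / 2) ^ 2) < Real.exp (-α * ‖x0 - y‖ ^ 2) := by
      apply Real.exp_lt_exp.2
      rw [← dist_eq_norm]
      have : α * dist x0 y ^ 2 < α * (r / 2) ^ 2 := by gcongr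
      linarith
    have h2 : 0 < Real.exp (-α * ‖x0 - y‖ ^ 2) - Real.exp (-α * (r / 2) ^ 2) := by linarith
    positivity
  have hsmall : ∀ᶠ k in atTop, u k x0 < m :=
    (hconv x0).eventually (gt_mem_nhds (by linarith))
  have hsub : ball y (r / 2) ⊆ ball x0 r := by
    intro z hz
    have h1 : dist z y < r / 2 := hz
    have := dist_triangle z y x0
    rw [dist_comm y x0] at this
    rw [mem_ball]; linarith
  filter_upwards [hpos, hsmall] with k hk1 hk2
  by_contra hcon
  push Not at hcon
  have hdisj : ∀ z ∈ ball x0 r, z ∉ frontier {x | 0 < u k x} := by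
    intro z hz hzf
    have := hcon z ⟨hrΩ hz, hzf⟩
    have hz' : dist z x0 < r := hz
    rw [dist_comm] at hz'
    linarith
  have hall : ball x0 r ⊆ {x | 0 < u k x} := by
    have huc : Continuous (u k) := (hmin k).2.1.continuous
    have ho : IsOpen {x | 0 < u k x} := isOpen_lt continuous_const huc
    have hpc : IsPreconnected (ball x0 r) := (convex_ball x0 r).isPreconnected
    refine hpc.subset_left_of_subset_union ho isClosed_closure.isOpen_compl
      (disjoint_compl_right.mono_left subset_closure) ?_ ⟨y, ?_, ?_⟩
    · intro z hz
      by_cases hzc : z ∈ closure {x | 0 < u k x}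
      · left
        by_contra hzn
        apply hdisj z hz
        rw [ho.frontier_eq]
        exact ⟨hzc, hzn⟩
      · exact Or.inr hzc
    · exact hsub (mem_ball_self (by positivity))
    · have := hk1 y (mem_ball_self hρ)
      show 0 < u k y
      linarith
  have := harnack hn (hmin k) (c := y) (R := r / 2) (ρ := ρ) (a := v y / 2) (α := α)
    (hsub.trans hrΩ) (fun x hx => hall (hsub hx)) (by positivity) (by positivity) hρ hk1 hα x0
  linarith

end AC

/-- compactness of minimizers — local Hausdorff convergence of the positivity
sets and of the free boundaries `F(w) = Ω ∩ ∂{w > 0}`. -/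
theorem stmt9 {n : ℕ} (hn : 2 ≤ n) (Ω : Set (EuclideanSpace ℝ (Fin n))) (hΩ : IsOpen Ω)
    (u : ℕ → EuclideanSpace ℝ (Fin n) → ℝ)
    (hmin : ∀ k, IsMinimizer Ω (u k))
    (hlip : ∀ K : Set (EuclideanSpace ℝ (Fin n)), IsCompact K →
      ∃ L : ℝ≥0, ∀ k, LipschitzOnWith L (u k) K)
    (v : EuclideanSpace ℝ (Fin n) → ℝ)
    (hconv : ∀ x, Tendsto (fun k => u k x) atTop (nhds (v x))) :
    ∀ K : Set (EuclideanSpace ℝ (Fin n)), IsCompact K → K ⊆ Ω → ∀ ε : ℝ, 0 < ε →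
      ∃ N : ℕ, ∀ k ≥ N,
        (∀ x ∈ {x | 0 < u k x} ∩ K, ∃ y ∈ {x | 0 < v x}, dist x y ≤ ε) ∧
        (∀ x ∈ {x | 0 < v x} ∩ K, ∃ y ∈ {x | 0 < u k x}, dist x y ≤ ε) ∧
        (∀ x ∈ (Ω ∩ frontier {x | 0 < u k x}) ∩ K,
          ∃ y ∈ Ω ∩ frontier {x | 0 < v x}, dist x y ≤ ε) ∧
        (∀ x ∈ (Ω ∩ frontier {x | 0 < v x}) ∩ K,
          ∃ y ∈ Ω ∩ frontier {x | 0 < u k x}, dist x y ≤ ε) := by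
  have hn0 : 0 < n := by omega
  have hvc : Continuous v := AC.lim_cont hlip hconv
  have hv0 : ∀ x, 0 ≤ v x := fun x => ge_of_tendsto' (hconv x) fun k => (hmin k).1 x
  have hopen : IsOpen {x | 0 < v x} := isOpen_lt continuous_const hvc
  intro K hK hKΩ ε hε
  have hε2 : 0 < ε / 2 := half_pos hε
  have hdist : ∀ {x0 x y : EuclideanSpace ℝ (Fin n)}, y ∈ ball x0 (ε / 2) → x ∈ ball x0 (ε / 2) →
      dist x y ≤ ε := by
    intro x0 x y hy hx
    rw [mem_ball] at hx hy
    have := dist_triangle_right x y x0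
    linarith
  have hzero : ∀ {x0 : EuclideanSpace ℝ (Fin n)}, x0 ∉ closure {x | 0 < v x} →
      ∀ᶠ x in nhds x0, v x = 0 := by
    intro x0 hx0
    filter_upwards [isClosed_closure.isOpen_compl.mem_nhds hx0] with x hx
    exact le_antisymm (not_lt.1 fun h => hx (subset_closure h)) (hv0 x)
  have A1 : ∀ᶠ k in atTop, ∀ x ∈ K, 0 < u k x → ∃ y ∈ {x | 0 < v x}, dist x y ≤ ε := by
    refine AC.compact_ev hK (P := fun k x => 0 < u k x → ∃ y ∈ {x | 0 < v x}, dist x y ≤ ε)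
      fun x0 hx0 => ?_
    by_cases hcl : x0 ∈ closure {x | 0 < v x}
    · obtain ⟨y, hy, hyd⟩ := Metric.mem_closure_iff.1 hcl (ε / 2) hε2
      rw [dist_comm] at hyd
      exact ⟨ε / 2, hε2, Eventually.of_forall fun k x hx _ => ⟨y, hy, hdist hyd hx⟩⟩
    · obtain ⟨ρ, hρ, h⟩ := AC.vanish hn0 hΩ hmin hlip hconv (hKΩ hx0) (hzero hcl)
      refine ⟨ρ, hρ, ?_⟩
      filter_upwards [h] with k hk x hx hux
      exact absurd (hk x hx) hux.ne'
  have A2 : ∀ᶠ k in atTop, ∀ x ∈ K, 0 < v x → ∃ y ∈ {x | 0 < u k x}, dist x y ≤ ε := by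
    refine AC.compact_ev hK (P := fun k x => 0 < v x → ∃ y ∈ {x | 0 < u k x}, dist x y ≤ ε)
      fun x0 hx0 => ?_
    by_cases hcl : x0 ∈ closure {x | 0 < v x}
    · obtain ⟨y, hy, hyd⟩ := Metric.mem_closure_iff.1 hcl (ε / 2) hε2
      rw [dist_comm] at hyd
      refine ⟨ε / 2, hε2, ?_⟩
      filter_upwards [(hconv y).eventually (lt_mem_nhds hy)] with k hk x hx _
      exact ⟨y, hk, hdist hyd hx⟩
    · obtain ⟨ρ, hρ, h⟩ := Metric.eventually_nhds_iff_ball.1 (hzero hcl)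
      exact ⟨ρ, hρ, Eventually.of_forall fun k x hx hvx => absurd (h x hx) hvx.ne'⟩
  have A3 : ∀ᶠ k in atTop, ∀ x ∈ K, x ∈ frontier {x | 0 < u k x} →
      ∃ y ∈ Ω ∩ frontier {x | 0 < v x}, dist x y ≤ ε := by
    refine AC.compact_ev hK (P := fun k x => x ∈ frontier {x | 0 < u k x} →
      ∃ y ∈ Ω ∩ frontier {x | 0 < v x}, dist x y ≤ ε) fun x0 hx0 => ?_
    by_cases hf : x0 ∈ frontier {x | 0 < v x}
    · exact ⟨ε / 2, hε2, Eventually.of_forall fun k x hx _ =>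
        ⟨x0, ⟨hKΩ hx0, hf⟩, hdist (mem_ball_self hε2) hx⟩⟩
    · by_cases hvx : 0 < v x0
      · obtain ⟨ρ, hρ, h⟩ := AC.pos_near hlip hconv hvx
        refine ⟨ρ, hρ, ?_⟩
        filter_upwards [h] with k hk x hx hxf
        have ho : IsOpen {x | 0 < u k x} := isOpen_lt continuous_const (hmin k).2.1.continuous
        rw [ho.frontier_eq] at hxf
        refine absurd ?_ hxf.2
        have := hk x hx
        show 0 < u k x
        linarith
      · have hcl : x0 ∉ closure {x | 0 < v x} := by
          intro h
          apply hf
          rw [hopen.frontier_eq]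
          exact ⟨h, hvx⟩
        obtain ⟨ρ, hρ, h⟩ := AC.vanish hn0 hΩ hmin hlip hconv (hKΩ hx0) (hzero hcl)
        refine ⟨ρ, hρ, ?_⟩
        filter_upwards [h] with k hk x hx hxf
        obtain ⟨z, hz, hzu⟩ := mem_closure_iff.1 (frontier_subset_closure hxf) _ isOpen_ball hx
        exact absurd (hk z hz) (ne_of_gt hzu)
  have A4 : ∀ᶠ k in atTop, ∀ x ∈ K, x ∈ frontier {x | 0 < v x} →
      ∃ y ∈ Ω ∩ frontier {x | 0 < u k x}, dist x y ≤ ε := by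
    refine AC.compact_ev hK (P := fun k x => x ∈ frontier {x | 0 < v x} →
      ∃ y ∈ Ω ∩ frontier {x | 0 < u k x}, dist x y ≤ ε) fun x0 hx0 => ?_
    by_cases hf : x0 ∈ frontier {x | 0 < v x}
    · obtain ⟨r, hr, hrs⟩ := Metric.isOpen_iff.1 hΩ x0 (hKΩ hx0)
      have h := AC.fb_near hn0 hmin hlip hconv hf (r := min r (ε / 2)) (lt_min hr hε2)
        ((ball_subset_ball (min_le_left _ _)).trans hrs)
      refine ⟨ε / 2, hε2, ?_⟩
      filter_upwards [h] with k hk x hx _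
      obtain ⟨y, hy, hyd⟩ := hk
      rw [dist_comm] at hyd
      exact ⟨y, hy, hdist (x0 := x0) (hyd.trans_le (min_le_right _ _)) hx⟩
    · obtain ⟨ρ, hρ, h⟩ := Metric.isOpen_iff.1 isClosed_frontier.isOpen_compl x0 hf
      exact ⟨ρ, hρ, Eventually.of_forall fun k x hx hxf => absurd hxf (h hx)⟩
  obtain ⟨N, hN⟩ := eventually_atTop.1 (A1.and (A2.and (A3.and A4)))
  refine ⟨N, fun k hk => ?_⟩
  obtain ⟨h1, h2, h3, h4⟩ := hN k hk
  exact ⟨fun x hx => h1 x hx.2 hx.1, fun x hx => h2 x hx.2 hx.1, fun x hx => h3 x hx.2 hx.1.2,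
    fun x hx => h4 x hx.2 hx.1.2⟩
end
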